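/- arXiv:1802.04672 — 4 statements merged into one kernel-verified Lean document; each statement's English description precedes it below -/
import Mathlib

section
/- Let f : ℝ → ℝ be continuous, bandlimited to σ rad/s (σ > 0), and satisfy |f(t)| ≤ A/(1+t²) for all t ∈ ℝ and some A > 0. Let α ∈ ℝ with |α| > Aσ and set g(t) = αt + f(t). Then g is a bijection of ℝ (so g⁻¹ exists on all of ℝ), and the function h(u) = g⁻¹(u) − u/α has a Fourier transform satisfying: for every b with 0 ≤ b < a, where a = (|α|/σ)·log(|α|/(Aσ)) − (|α| − Aσ)/σ, there exists a constant C > 0 such that |ĥ(ξ)| ≤ C·e^{−2π|ξ|b} for all ξ ∈ ℝ. -/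
/-!
With `G z = α z + F z`, where `F` is the entire extension of `f`, the substitution `u = g t` gives
`ĥ(ξ) = -|α|⁻¹ ∫ F(t) e^{-2πiξ G(t)} G'(t) dt`, which no longer involves the inverse function and
whose integrand is entire. Shifting the line of integration to `Im z = ±Y`, the sign being opposite
to that of `ξ α`, multiplies the integrand by `e^{2πξ Im G}` in absolute value, and `Im G` is
controlled by `|Im F(x + iy)| ≤ A (e^{σ|y|} - 1)`. At the height `Y = log (|α| / (Aσ)) / σ`, where
the bound `A σ e^{σ|y|}` for `|F'|` reaches `|α|`, the exponent is exactly `-2π|ξ|a`.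

The estimates on `F` (`exists_extension`) rest on three facts: `F` is the inverse Fourier integral
of a continuous function on `[-σ/2π, σ/2π]`; the sharp Bernstein inequality holds on the real line
(`norm_bandInt_deriv_le`, through M. Riesz's interpolation formula); and by Phragmén–Lindelöf
(`norm_le_of_exp_type`) bounds on the real line extend to the plane with a factor `e^{σ|Im z|}`.
Applied to `F'` the last fact gives the bound on `Im F`, applied to `(1 + z²) F` it gives the decay
that justifies the contour shift (`integral_shift`).
-/

open Real FourierTransform

/-- A function `f : ℝ → ℝ` is bandlimited to `σ` rad/s if its Fourier transform
`f̂(ξ) = ∫ f(t) e^{−2πiξt} dt` vanishes whenever `2π|ξ| > σ`. -/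
def Bandlimited (σ : ℝ) (f : ℝ → ℝ) : Prop :=
  ∀ ξ : ℝ, σ < 2 * Real.pi * |ξ| → 𝓕 (fun t : ℝ => (f t : ℂ)) ξ = 0

/-! ### Phragmén–Lindelöf for functions of exponential type -/

lemma one_add_sq_le_exp {δ r : ℝ} (hδ : 0 < δ) (hr : 0 ≤ r) :
    1 + r ^ 2 ≤ (1 + 2 / δ ^ 2) * Real.exp (δ * r) := by
  have h := Real.quadratic_le_exp_of_nonneg (mul_nonneg hδ.le hr)
  have h1 : r ^ 2 = 2 / δ ^ 2 * ((δ * r) ^ 2 / 2) := by field_simp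
  have h2 : 0 ≤ 2 / δ ^ 2 := by positivity
  have h3 : 0 ≤ δ * r := by positivity
  calc 1 + r ^ 2 ≤ Real.exp (δ * r) + 2 / δ ^ 2 * Real.exp (δ * r) := by
        rw [h1]
        gcongr
        · nlinarith [sq_nonneg (δ * r)]
        · linarith
    _ = _ := by ring

/-- Phragmén–Lindelöf in one half-plane, with a spare exponential factor `σ' > σ`; the sign `ε`
selects the upper or the lower half-plane. -/
lemma norm_le_of_exp_type_aux {H : ℂ → ℂ} (hH : Differentiable ℂ H) {σ σ' C M ε : ℝ}
    (hσ : σ < σ') (hC : 0 ≤ C) (hε : ε = 1 ∨ ε = -1)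
    (hgrow : ∀ z, ‖H z‖ ≤ C * (1 + ‖z‖ ^ 2) * Real.exp (σ * |z.im|))
    (hM : ∀ x : ℝ, ‖H x‖ ≤ M) {z : ℂ} (hz : 0 ≤ ε * z.im) :
    ‖H z‖ ≤ M * Real.exp (σ' * |z.im|) := by
  have hε2 : ε * ε = 1 := by rcases hε with rfl | rfl <;> norm_num
  have hεa : |ε| = 1 := by rcases hε with rfl | rfl <;> norm_num
  have hε2c : (ε : ℂ) * ε = 1 := by exact_mod_cast hε2
  set P : ℂ → ℂ := fun w => H (Complex.I * ε * w) * Complex.exp (-(σ' * w)) with hP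
  have hPn : ∀ w : ℂ, ‖P w‖ = ‖H (Complex.I * ε * w)‖ * Real.exp (-(σ' * w.re)) := by
    intro w
    simp [hP, Complex.norm_exp]
  have him : ∀ w : ℂ, (Complex.I * ε * w).im = ε * w.re := by intro w; simp
  have hnorm : ∀ w : ℂ, ‖Complex.I * ε * w‖ = ‖w‖ := by intro w; simp [hεa]
  have hPb : ∀ w : ℂ, 0 ≤ w.re →
      ‖P w‖ ≤ C * (1 + ‖w‖ ^ 2) * Real.exp (-((σ' - σ) * w.re)) := by
    intro w hw
    rw [hPn]
    have := hgrow (Complex.I * ε * w)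
    rw [him, hnorm, abs_mul, hεa, one_mul, abs_of_nonneg hw] at this
    calc _ ≤ C * (1 + ‖w‖ ^ 2) * Real.exp (σ * w.re) * Real.exp (-(σ' * w.re)) := by gcongr
      _ = _ := by rw [mul_assoc, ← Real.exp_add]; ring_nf
  have key := PhragmenLindelof.right_half_plane_of_bounded_on_real (C := M) (f := P)
    (z := -(Complex.I * ε * z)) ?_ ?_ ?_ ?_ ?_
  · rw [hPn] at key
    have e1 : Complex.I * ε * -(Complex.I * ε * z) = z := by
      have : Complex.I * ε * -(Complex.I * ε * z) = -(Complex.I * Complex.I) * (ε * ε) * z := by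
        ring
      rw [this, hε2c, Complex.I_mul_I]; ring
    have e2 : (-(Complex.I * ε * z)).re = |z.im| := by
      have : |z.im| = |ε * z.im| := by rw [abs_mul, hεa, one_mul]
      rw [this, abs_of_nonneg hz]; simp
    rw [e1, e2, Real.exp_neg, ← div_eq_mul_inv, div_le_iff₀ (Real.exp_pos _)] at key
    exact key
  · apply Differentiable.diffContOnCl
    have : Differentiable ℂ fun w : ℂ => H (Complex.I * ε * w) := hH.comp (by fun_prop)
    exact this.mul (by fun_prop)
  · refine ⟨1, by norm_num, 1, ?_⟩
    refine Asymptotics.IsBigO.of_bound (C * (1 + 2 / 1 ^ 2)) ?_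
    rw [Filter.eventually_inf_principal]
    refine Filter.Eventually.of_forall fun w hw => ?_
    have hw' : 0 ≤ w.re := le_of_lt hw
    refine (hPb w hw').trans ?_
    have h1 := one_add_sq_le_exp one_pos (norm_nonneg w)
    have h2 : Real.exp (-((σ' - σ) * w.re)) ≤ 1 :=
      Real.exp_le_one_iff.2 (by have := mul_nonneg (sub_pos.2 hσ).le hw'; linarith)
    rw [Real.rpow_one, Real.norm_of_nonneg (Real.exp_pos _).le, mul_assoc C]
    calc _ ≤ C * ((1 + ‖w‖ ^ 2) * 1) := by gcongr
      _ ≤ C * ((1 + 2 / 1 ^ 2) * Real.exp (1 * ‖w‖)) := by rw [mul_one]; gcongr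
      _ = _ := by ring
  · refine Filter.isBoundedUnder_of_eventually_le (a := C * (1 + 2 / (σ' - σ) ^ 2)) ?_
    filter_upwards [Filter.eventually_ge_atTop 0] with x hx
    refine (hPb x (by simpa using hx)).trans ?_
    have h1 := one_add_sq_le_exp (sub_pos.2 hσ) hx
    rw [Complex.norm_real, Real.norm_of_nonneg hx, Complex.ofReal_re, Real.exp_neg,
      ← div_eq_mul_inv, div_le_iff₀ (Real.exp_pos _), mul_assoc]
    gcongr
  · intro x
    rw [hPn]
    have : Complex.I * ε * (x * Complex.I) = ((-(ε * x) : ℝ) : ℂ) := by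
      push_cast
      linear_combination (ε * x : ℂ) * Complex.I_mul_I
    rw [this]
    simpa using hM (-(ε * x))
  · simpa using hz

/-- Phragmén–Lindelöf for functions of exponential type: a bound `M` on the real line propagates
to `M e^{σ|Im z|}`, even if a quadratic factor is allowed in the a priori growth. -/
lemma norm_le_of_exp_type {H : ℂ → ℂ} (hH : Differentiable ℂ H) {σ C M : ℝ} (hC : 0 ≤ C)
    (hgrow : ∀ z, ‖H z‖ ≤ C * (1 + ‖z‖ ^ 2) * Real.exp (σ * |z.im|))
    (hM : ∀ x : ℝ, ‖H x‖ ≤ M) (z : ℂ) :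
    ‖H z‖ ≤ M * Real.exp (σ * |z.im|) := by
  obtain ⟨ε, hε, hz⟩ : ∃ ε : ℝ, (ε = 1 ∨ ε = -1) ∧ 0 ≤ ε * z.im := by
    rcases le_total 0 z.im with h | h
    · exact ⟨1, Or.inl rfl, by linarith⟩
    · exact ⟨-1, Or.inr rfl, by linarith⟩
  have hcont : Filter.Tendsto (fun s : ℝ => M * Real.exp (s * |z.im|)) (nhdsWithin σ (Set.Ioi σ))
      (nhds (M * Real.exp (σ * |z.im|))) :=
    (Continuous.tendsto (by fun_prop) σ).mono_left nhdsWithin_le_nhds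
  refine ge_of_tendsto hcont ?_
  filter_upwards [self_mem_nhdsWithin] with s hs
  exact norm_le_of_exp_type_aux hH hs hC hε hgrow hM hz

/-! ### The Fourier series of the triangle wave -/

/-- Fourier expansion of the triangle wave; the source of the coefficients in M. Riesz's
interpolation formula for the derivative. -/
lemma hasSum_triangle {θ : ℝ} (h1 : -(Real.pi / 2) ≤ θ) (h2 : θ ≤ Real.pi / 2) :
    HasSum (fun k : ℕ => (-1) ^ k / (2 * (k : ℝ) + 1) ^ 2 * Real.sin ((2 * k + 1) * θ))
      (Real.pi * θ / 4) := by
  have hpi := Real.pi_pos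
  have hB : ∀ x : ℝ, x ∈ Set.Icc (0 : ℝ) 1 →
      HasSum (fun n : ℕ => 1 / (n : ℝ) ^ 2 * Real.cos (2 * Real.pi * n * x))
        (Real.pi ^ 2 * (x ^ 2 - x + 6⁻¹)) := by
    intro x hx
    have h := hasSum_one_div_nat_pow_mul_cos one_ne_zero hx
    have hb := bernoulliFun_two x
    rw [bernoulliFun] at hb
    rw [mul_one, hb] at h
    have h2 : ((Nat.factorial 2 : ℕ) : ℝ) = 2 := by norm_num [Nat.factorial]
    rw [h2] at h
    have h3 : Real.pi ^ 2 * (x ^ 2 - x + 6⁻¹) =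
        (-1) ^ (1 + 1) * (2 * Real.pi) ^ 2 / 2 / 2 * (x ^ 2 - x + 6⁻¹) := by ring
    rw [h3]
    exact h
  set x : ℝ := 1 / 4 - θ / (2 * Real.pi) with hx
  have hx0 : 0 ≤ x := by
    rw [hx, sub_nonneg, div_le_iff₀ (by positivity)]; linarith
  have hx1 : x ≤ 1 / 2 := by
    have : -(1 / 4) ≤ θ / (2 * Real.pi) := by rw [le_div_iff₀ (by positivity)]; linarith
    linarith
  have hall := hB x ⟨hx0, by linarith⟩
  have heven : HasSum (fun k : ℕ => 1 / ((2 * k : ℕ) : ℝ) ^ 2 *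
      Real.cos (2 * Real.pi * (2 * k : ℕ) * x))
      (1 / 4 * (Real.pi ^ 2 * ((2 * x) ^ 2 - 2 * x + 6⁻¹))) := by
    have h := (hB (2 * x) ⟨by linarith, by linarith⟩).mul_left (1 / 4)
    refine Eq.mp (congrArg (fun F => HasSum F _) (funext fun k => ?_)) h
    push_cast
    rw [show 2 * Real.pi * (2 * (k : ℝ)) * x = 2 * Real.pi * k * (2 * x) by ring, mul_pow]
    rw [← mul_assoc, one_div_mul_one_div]
    norm_num
  have hoddsum : Summable (fun k : ℕ => 1 / ((2 * k + 1 : ℕ) : ℝ) ^ 2 *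
      Real.cos (2 * Real.pi * (2 * k + 1 : ℕ) * x)) :=
    hall.summable.comp_injective (i := fun k : ℕ => 2 * k + 1) (fun a b h => by simpa using h)
  have hu := (HasSum.even_add_odd
    (f := fun n : ℕ => 1 / (n : ℝ) ^ 2 * Real.cos (2 * Real.pi * n * x)) heven hoddsum.hasSum).unique hall
  have hodd := hoddsum.hasSum
  have hfun : (fun k : ℕ => (-1) ^ k / (2 * (k : ℝ) + 1) ^ 2 * Real.sin ((2 * k + 1) * θ)) =
      fun k : ℕ => 1 / ((2 * k + 1 : ℕ) : ℝ) ^ 2 *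
        Real.cos (2 * Real.pi * (2 * k + 1 : ℕ) * x) := by
    funext k
    have : 2 * Real.pi * (2 * k + 1 : ℕ) * x =
        (Real.pi / 2 - (2 * k + 1) * θ) + k * Real.pi := by
      rw [hx]; push_cast; field_simp; ring
    rw [this, Real.cos_add_nat_mul_pi, Real.cos_pi_div_two_sub]
    push_cast; ring
  have hval : Real.pi * θ / 4 = Real.pi ^ 2 * (x ^ 2 - x + 6⁻¹) -
      1 / 4 * (Real.pi ^ 2 * ((2 * x) ^ 2 - 2 * x + 6⁻¹)) := by
    rw [hx]; field_simp; ring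
  rw [hfun, hval, ← hu, add_sub_cancel_left]
  exact hodd

lemma hasSum_odd_sq : HasSum (fun k : ℕ => 1 / (2 * (k : ℝ) + 1) ^ 2) (Real.pi ^ 2 / 8) := by
  have hpi := Real.pi_pos
  have h := hasSum_triangle (θ := Real.pi / 2) (by linarith) le_rfl
  rw [show Real.pi * (Real.pi / 2) / 4 = Real.pi ^ 2 / 8 by ring] at h
  convert h using 2 with k
  rw [show (2 * (k : ℝ) + 1) * (Real.pi / 2) = Real.pi / 2 + k * Real.pi by ring,
    Real.sin_add_nat_mul_pi, Real.sin_pi_div_two, div_mul_eq_mul_div, mul_one, ← mul_pow]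
  norm_num

/-! ### Band-limited integrals and Bernstein's inequality -/

/-- The entire function `z ↦ ∫_{-B}^{B} φ(ξ) e^{2πiξz} dξ` with spectrum in `[-B, B]`. -/
noncomputable def bandInt (φ : ℝ → ℂ) (B : ℝ) (z : ℂ) : ℂ :=
  ∫ ξ in (-B)..B, φ ξ * Complex.exp (2 * Real.pi * Complex.I * ξ * z)

lemma hasSum_of_eq {E : Type*} [AddCommMonoid E] [TopologicalSpace E] {u v : ℕ → E} {a b : E}
    (hv : HasSum v b) (huv : ∀ k, u k = v k) (hab : a = b) : HasSum u a := by
  rw [hab, funext huv]; exact hv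

lemma norm_exp_band (ξ : ℝ) (z : ℂ) :
    ‖Complex.exp (2 * Real.pi * Complex.I * ξ * z)‖ = Real.exp (-(2 * Real.pi * ξ * z.im)) := by
  rw [Complex.norm_exp]
  congr 1
  have : 2 * (Real.pi : ℂ) * Complex.I * ξ * z = ((2 * Real.pi * ξ : ℝ) : ℂ) * (Complex.I * z) := by
    push_cast; ring
  rw [this, Complex.re_ofReal_mul]; simp

lemma norm_exp_band_le {ξ B : ℝ} (hξ : |ξ| ≤ B) (z : ℂ) :
    ‖Complex.exp (2 * Real.pi * Complex.I * ξ * z)‖ ≤ Real.exp (2 * Real.pi * B * |z.im|) := by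
  rw [norm_exp_band, Real.exp_le_exp]
  have hpi := Real.pi_pos
  calc -(2 * Real.pi * ξ * z.im) ≤ |2 * Real.pi * ξ * z.im| := neg_le_abs _
    _ = 2 * Real.pi * |ξ| * |z.im| := by
      rw [abs_mul, abs_mul, abs_of_pos (by positivity : 0 < 2 * Real.pi)]
    _ ≤ _ := by gcongr

lemma abs_le_of_mem_uIoc {ξ B : ℝ} (hB : 0 ≤ B) (h : ξ ∈ Set.uIoc (-B) B) : |ξ| ≤ B := by
  rw [Set.uIoc_of_le (by linarith)] at h
  exact abs_le.2 ⟨h.1.le, h.2⟩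

lemma bandInt_hasDerivAt {φ : ℝ → ℂ} (hφ : Continuous φ) {B : ℝ} (hB : 0 ≤ B) (z : ℂ) :
    HasDerivAt (bandInt φ B) (bandInt (fun ξ => 2 * Real.pi * Complex.I * ξ * φ ξ) B z) z := by
  have hd : ∀ (ξ : ℝ) (w : ℂ), HasDerivAt
      (fun w : ℂ => φ ξ * Complex.exp (2 * Real.pi * Complex.I * ξ * w))
      (2 * Real.pi * Complex.I * ξ * φ ξ * Complex.exp (2 * Real.pi * Complex.I * ξ * w)) w := by
    intro ξ w
    have h := (((hasDerivAt_id w).const_mul (2 * Real.pi * Complex.I * ξ)).cexp).const_mul (φ ξ)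
    simp only [id, mul_one] at h
    exact h.congr_deriv (by ring)
  refine (intervalIntegral.hasDerivAt_integral_of_dominated_loc_of_deriv_le
    (bound := fun ξ => ‖2 * Real.pi * Complex.I * ξ * φ ξ‖ *
      Real.exp (2 * Real.pi * B * (|z.im| + 1)))
    (F' := fun w ξ => 2 * Real.pi * Complex.I * ξ * φ ξ *
      Complex.exp (2 * Real.pi * Complex.I * ξ * w))
    (Metric.ball_mem_nhds z one_pos) ?_ ?_ ?_ ?_ ?_ ?_).2
  · exact Filter.Eventually.of_forall fun w =>
      (by fun_prop : Continuous _).aestronglyMeasurable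
  · exact (by fun_prop : Continuous _).intervalIntegrable _ _
  · exact (by fun_prop : Continuous _).aestronglyMeasurable
  · refine Filter.Eventually.of_forall fun ξ hξ w hw => ?_
    rw [norm_mul]
    refine mul_le_mul_of_nonneg_left ?_ (norm_nonneg _)
    refine (norm_exp_band_le (abs_le_of_mem_uIoc hB hξ) w).trans ?_
    have h1 : |w.im| ≤ |z.im| + 1 := by
      have h2 : |(w - z).im| ≤ 1 :=
        (Complex.abs_im_le_norm _).trans (by simpa [dist_eq_norm] using (Metric.mem_ball.1 hw).le)
      have h3 : w.im = z.im + (w - z).im := by simp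
      rw [h3]
      exact (abs_add_le _ _).trans (by linarith)
    have hpi := Real.pi_pos
    gcongr
  · exact (by fun_prop : Continuous _).intervalIntegrable _ _
  · exact Filter.Eventually.of_forall fun ξ _ w _ => hd ξ w

lemma exists_norm_bandInt_le {φ : ℝ → ℂ} (hφ : Continuous φ) {B : ℝ} (hB : 0 ≤ B) :
    ∃ C, 0 ≤ C ∧ ∀ z, ‖bandInt φ B z‖ ≤ C * Real.exp (2 * Real.pi * B * |z.im|) := by
  obtain ⟨K, hK⟩ := isCompact_Icc.exists_bound_of_continuousOn (s := Set.Icc (-B) B) hφ.continuousOn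
  have hK0 : 0 ≤ K := (norm_nonneg _).trans (hK 0 ⟨by linarith, hB⟩)
  refine ⟨K * |B - -B|, by positivity, fun z => ?_⟩
  have := intervalIntegral.norm_integral_le_of_norm_le_const (a := -B) (b := B)
    (f := fun ξ : ℝ => φ ξ * Complex.exp (2 * Real.pi * Complex.I * ξ * z))
    (C := K * Real.exp (2 * Real.pi * B * |z.im|)) ?_
  · refine this.trans (le_of_eq ?_); ring
  · intro ξ hξ
    have h1 := abs_le_of_mem_uIoc hB hξ
    rw [norm_mul]
    exact mul_le_mul (hK ξ (abs_le.1 h1)) (norm_exp_band_le h1 z) (norm_nonneg _) hK0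

/-- The sharp Bernstein inequality: integrating the Fourier expansion of `ξ` on `[-B, B]` against
`φ(ξ) e^{2πiξx}` writes the derivative as a series of translates (M. Riesz's interpolation
formula) whose coefficients have absolute sum `2πB`. -/
lemma norm_bandInt_deriv_le {φ : ℝ → ℂ} (hφ : Continuous φ) {B M : ℝ} (hB : 0 < B)
    (hM : ∀ x : ℝ, ‖bandInt φ B x‖ ≤ M) (x : ℝ) :
    ‖bandInt (fun ξ => 2 * Real.pi * Complex.I * ξ * φ ξ) B x‖ ≤ 2 * Real.pi * B * M := by
  have hpi := Real.pi_pos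
  -- the nodes of the interpolation formula are `x ± p k`
  set p : ℕ → ℝ := fun k => (2 * k + 1) / (4 * B) with hp
  set c : ℕ → ℝ := fun k => 8 * B / Real.pi * ((-1) ^ k / (2 * (k : ℝ) + 1) ^ 2) with hc
  have hcn : ∀ k, |c k| = 8 * B / Real.pi * (1 / (2 * (k : ℝ) + 1) ^ 2) := by
    intro k
    rw [hc]
    simp only [abs_mul, abs_div, abs_pow, abs_neg, abs_one, one_pow]
    rw [abs_of_pos hpi, abs_of_pos hB, abs_of_pos (by positivity : (0 : ℝ) < 2 * k + 1)]
    norm_num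
  have hcs : HasSum (fun k => |c k|) (Real.pi * B) := by
    simp_rw [hcn]
    refine hasSum_of_eq (hasSum_odd_sq.mul_left (8 * B / Real.pi)) (fun _ => rfl) ?_
    field_simp
  let e : ℝ → ℝ → ℂ := fun y ξ => φ ξ * Complex.exp (2 * Real.pi * Complex.I * ξ * (y : ℂ))
  have hec : ∀ y, Continuous (e y) := by intro y; simp only [e]; fun_prop
  have hen : ∀ y ξ, ‖e y ξ‖ = ‖φ ξ‖ := by
    intro y ξ; simp only [e]; rw [norm_mul, norm_exp_band]; simp
  have hsum : HasSum (fun k => ∫ ξ in (-B)..B, (c k : ℂ) * (e (x + p k) ξ - e (x - p k) ξ))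
      (bandInt (fun ξ => 2 * Real.pi * Complex.I * ξ * φ ξ) B x) := by
    refine intervalIntegral.hasSum_integral_of_dominated_convergence
      (fun k ξ => |c k| * (2 * ‖φ ξ‖)) ?_ ?_ ?_ ?_ ?_
    · intro k
      have h1 := hec (x + p k)
      have h2 := hec (x - p k)
      exact (by fun_prop : Continuous _).aestronglyMeasurable
    · refine fun k => Filter.Eventually.of_forall fun ξ _ => ?_
      rw [norm_mul, Complex.norm_real, Real.norm_eq_abs]
      refine mul_le_mul_of_nonneg_left ((norm_sub_le _ _).trans ?_) (abs_nonneg _)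
      rw [hen, hen]; linarith
    · exact Filter.Eventually.of_forall fun ξ _ => hcs.summable.mul_right _
    · simp_rw [tsum_mul_right]
      exact (by fun_prop : Continuous _).intervalIntegrable _ _
    · refine Filter.Eventually.of_forall fun ξ hξ => ?_
      have hξ' := abs_le.1 (abs_le_of_mem_uIoc hB.le hξ)
      set θ : ℝ := Real.pi * ξ / (2 * B) with hθ
      have hθ1 : -(Real.pi / 2) ≤ θ := by
        rw [hθ, le_div_iff₀ (by positivity)]; nlinarith
      have hθ2 : θ ≤ Real.pi / 2 := by
        rw [hθ, div_le_iff₀ (by positivity)]; nlinarith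
      have hs := ((Complex.hasSum_ofReal.2 (hasSum_triangle hθ1 hθ2)).mul_left
        (16 * B / Real.pi * Complex.I * e x ξ))
      have hpiC : (Real.pi : ℂ) ≠ 0 := by exact_mod_cast hpi.ne'
      have hBC : (B : ℂ) ≠ 0 := by exact_mod_cast hB.ne'
      refine hasSum_of_eq hs (fun k => ?_) ?_
      · have e1 : ∀ s : ℝ, e (x + s * p k) ξ =
            e x ξ * Complex.exp (s * ((2 * k + 1) * θ : ℝ) * Complex.I) := by
          intro s
          simp only [e]
          rw [mul_assoc (φ ξ), ← Complex.exp_add]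
          congr 2
          simp only [hp, hθ]
          push_cast
          field_simp
          ring
        have e2 := e1 1
        have e3 := e1 (-1)
        rw [one_mul] at e2
        rw [neg_one_mul, ← sub_eq_add_neg] at e3
        rw [e2, e3]
        have hsin := Complex.two_sin (((2 * k + 1) * θ : ℝ) : ℂ)
        have h1 : (Complex.exp (((1 : ℝ) : ℂ) * (((2 * k + 1) * θ : ℝ) : ℂ) * Complex.I) -
            Complex.exp (((-1 : ℝ) : ℂ) * (((2 * k + 1) * θ : ℝ) : ℂ) * Complex.I)) =
            2 * Complex.I * Complex.sin (((2 * k + 1) * θ : ℝ) : ℂ) := by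
          rw [mul_right_comm 2 Complex.I (Complex.sin _), hsin, mul_assoc _ Complex.I Complex.I,
            Complex.I_mul_I]
          push_cast
          ring_nf
        rw [← mul_sub, h1]
        simp only [hc]
        push_cast
        ring
      · simp only [e, hθ]
        push_cast
        field_simp
        ring
  rw [← hsum.tsum_eq]
  have hfin := hcs.mul_right (2 * M)
  rw [show Real.pi * B * (2 * M) = 2 * Real.pi * B * M by ring] at hfin
  refine tsum_of_norm_bounded hfin fun k => ?_
  rw [intervalIntegral.integral_const_mul, intervalIntegral.integral_sub
    ((hec _).intervalIntegrable _ _) ((hec _).intervalIntegrable _ _), norm_mul,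
    Complex.norm_real, Real.norm_eq_abs]
  refine mul_le_mul_of_nonneg_left ((norm_sub_le _ _).trans ?_) (abs_nonneg _)
  rw [two_mul]
  exact add_le_add (hM _) (hM _)

/-! ### The entire extension of a bandlimited function -/

lemma integrable_of_moderate {f : ℝ → ℂ} {A : ℝ} (hf : Continuous f)
    (hdecay : ∀ t : ℝ, ‖f t‖ ≤ A / (1 + t ^ 2)) : MeasureTheory.Integrable f := by
  refine (integrable_inv_one_add_sq.const_mul A).mono' hf.aestronglyMeasurable ?_
  exact Filter.Eventually.of_forall fun t => by simpa [div_eq_mul_inv] using hdecay t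

/-- Fourier inversion for a bandlimited function of moderate decrease. -/
lemma eq_bandInt {f : ℝ → ℝ} {σ A : ℝ} (hσ : 0 < σ) (hf : Continuous f) (hbl : Bandlimited σ f)
    (hdecay : ∀ t : ℝ, |f t| ≤ A / (1 + t ^ 2)) :
    Continuous (𝓕 (fun t : ℝ => (f t : ℂ))) ∧
    ∀ x : ℝ, bandInt (𝓕 (fun t : ℝ => (f t : ℂ))) (σ / (2 * Real.pi)) x = f x := by
  have hpi := Real.pi_pos
  set B := σ / (2 * Real.pi) with hBdef
  have hB : 0 < B := by positivity
  set fc : ℝ → ℂ := fun t => (f t : ℂ) with hfc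
  have hfcc : Continuous fc := by fun_prop
  have hint : MeasureTheory.Integrable fc :=
    integrable_of_moderate hfcc (A := A) fun t => by simpa [hfc] using hdecay t
  have hcont : Continuous (𝓕 fc) :=
    VectorFourier.fourierIntegral_continuous Real.continuous_fourierChar
      (L := innerₗ ℝ) (by exact continuous_inner) hint
  have hzero : ∀ ξ, ξ ∉ Set.Icc (-B) B → 𝓕 fc ξ = 0 := by
    intro ξ hξ
    apply hbl
    have h1 : B < |ξ| := by
      by_contra h
      exact hξ (abs_le.1 (not_lt.1 h))
    rw [hBdef, div_lt_iff₀ (by positivity)] at h1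
    linarith
  have hint2 : MeasureTheory.Integrable (𝓕 fc) :=
    hcont.integrable_of_hasCompactSupport
      (HasCompactSupport.intro isCompact_Icc fun ξ hξ => hzero ξ hξ)
  refine ⟨hcont, fun x => ?_⟩
  have hinv := congrFun (hfcc.fourierInv_fourier_eq hint hint2) x
  rw [Real.fourierInv_eq'] at hinv
  change _ = (f x : ℂ) at hinv
  rw [← hinv, ← MeasureTheory.setIntegral_eq_integral_of_forall_compl_eq_zero
    (s := Set.Icc (-B) B) (fun ξ hξ => by rw [hzero ξ hξ, smul_zero]),
    MeasureTheory.integral_Icc_eq_integral_Ioc,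
    ← intervalIntegral.integral_of_le (by linarith)]
  refine intervalIntegral.integral_congr fun ξ _ => ?_
  simp only [smul_eq_mul]
  rw [mul_comm]
  congr 2
  simp
  ring

/-- The analytic data carried by a bandlimited function of moderate decrease: an entire extension
`F` whose quadratic decay, and whose Bernstein bound for `F'`, extend to the complex plane at the
price of a factor `e^{σ|Im z|}`. -/
lemma exists_extension {f : ℝ → ℝ} {σ A : ℝ} (hσ : 0 < σ) (hA : 0 < A) (hf : Continuous f)
    (hbl : Bandlimited σ f) (hdecay : ∀ t : ℝ, |f t| ≤ A / (1 + t ^ 2)) :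
    ∃ F F' : ℂ → ℂ, (∀ z, HasDerivAt F (F' z) z) ∧ Differentiable ℂ F' ∧
      (∀ x : ℝ, F x = f x) ∧
      (∀ z, ‖F z‖ * ‖1 + z ^ 2‖ ≤ A * Real.exp (σ * |z.im|)) ∧
      ∀ z, ‖F' z‖ ≤ A * σ * Real.exp (σ * |z.im|) := by
  have hpi := Real.pi_pos
  obtain ⟨hcont, heq⟩ := eq_bandInt hσ hf hbl hdecay
  set φ := 𝓕 (fun t : ℝ => (f t : ℂ))
  set B := σ / (2 * Real.pi) with hBdef
  have hB : 0 < B := by positivity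
  have hσB : 2 * Real.pi * B = σ := by rw [hBdef]; field_simp
  set ψ : ℝ → ℂ := fun ξ => 2 * Real.pi * Complex.I * ξ * φ ξ with hψ
  have hψc : Continuous ψ := by fun_prop
  have hd : ∀ z, HasDerivAt (bandInt φ B) (bandInt ψ B z) z := bandInt_hasDerivAt hcont hB.le
  have hd' : Differentiable ℂ (bandInt ψ B) := fun z =>
    (bandInt_hasDerivAt hψc hB.le z).differentiableAt
  have hF : Differentiable ℂ (bandInt φ B) := fun z => (hd z).differentiableAt
  refine ⟨bandInt φ B, bandInt ψ B, hd, hd', heq, ?_, ?_⟩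
  · obtain ⟨C, hC, hb⟩ := exists_norm_bandInt_le hcont hB.le
    rw [hσB] at hb
    intro z
    rw [← norm_mul]
    refine norm_le_of_exp_type (H := fun z => bandInt φ B z * (1 + z ^ 2)) (C := C)
      (hF.mul (by fun_prop)) hC (fun w => ?_) (fun x => ?_) z
    · have h1 : ‖1 + w ^ 2‖ ≤ 1 + ‖w‖ ^ 2 := (norm_add_le _ _).trans (by simp)
      rw [norm_mul]
      calc _ ≤ C * Real.exp (σ * |w.im|) * (1 + ‖w‖ ^ 2) := by gcongr; exact hb w
        _ = _ := by ring
    · have h1 : (1 + (x : ℂ) ^ 2) = ((1 + x ^ 2 : ℝ) : ℂ) := by push_cast; ring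
      have h2 : 0 < 1 + x ^ 2 := by positivity
      rw [heq, h1, norm_mul, Complex.norm_real, Complex.norm_real, Real.norm_eq_abs,
        Real.norm_of_nonneg h2.le, ← le_div_iff₀ h2]
      exact hdecay x
  · obtain ⟨C, hC, hb⟩ := exists_norm_bandInt_le hψc hB.le
    rw [hσB] at hb
    have hM : ∀ x : ℝ, ‖bandInt φ B x‖ ≤ A := by
      intro x
      rw [heq, Complex.norm_real]
      exact (hdecay x).trans (div_le_self hA.le (by nlinarith [sq_nonneg x]))
    have hber : ∀ x : ℝ, ‖bandInt ψ B x‖ ≤ A * σ := by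
      intro x
      have h := norm_bandInt_deriv_le hcont hB hM x
      rwa [hσB, mul_comm σ A] at h
    refine norm_le_of_exp_type hd' hC (fun w => ?_) hber
    refine (hb w).trans ?_
    have : 1 ≤ 1 + ‖w‖ ^ 2 := by nlinarith [sq_nonneg ‖w‖]
    gcongr
    exact le_mul_of_one_le_right hC this

/-! ### Estimates in horizontal strips and the contour shift -/

/-- Integrating the bound on `F'` along the vertical segment from `x` to `x + iεy`. -/
lemma norm_sub_le_of_deriv_exp {F F' : ℂ → ℂ} {A σ ε : ℝ} (hd : ∀ z, HasDerivAt F (F' z) z)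
    (hb : ∀ z, ‖F' z‖ ≤ A * σ * Real.exp (σ * |z.im|)) (hε : |ε| = 1) (x : ℝ) {y : ℝ}
    (hy : 0 ≤ y) :
    ‖F (x + (ε * y : ℝ) * Complex.I) - F x‖ ≤ A * (Real.exp (σ * y) - 1) := by
  have hder : ∀ t : ℝ, HasDerivAt (fun t : ℝ => F (x + (ε * t : ℝ) * Complex.I) - F x)
      (F' (x + (ε * t : ℝ) * Complex.I) * (ε * Complex.I)) t := by
    intro t
    have h1 : HasDerivAt (fun w : ℂ => (x : ℂ) + (ε * w) * Complex.I) (ε * Complex.I) (t : ℂ) := by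
      have := ((((hasDerivAt_id (t : ℂ)).const_mul (ε : ℂ)).mul_const Complex.I).const_add (x : ℂ))
      simpa using this
    have h2 : HasDerivAt F (F' (x + (ε * t : ℝ) * Complex.I))
        ((fun w : ℂ => (x : ℂ) + (ε * w) * Complex.I) (t : ℂ)) := by
      have := hd (x + (ε * t : ℝ) * Complex.I)
      push_cast at this ⊢
      exact this
    have h3 := ((h2.comp (t : ℂ) h1).comp_ofReal).sub_const (F x)
    simpa using h3
  have hB : ∀ t : ℝ, HasDerivAt (fun t => A * (Real.exp (σ * t) - 1))
      (A * σ * Real.exp (σ * t)) t := by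
    intro t
    have := ((((hasDerivAt_id t).const_mul σ).exp).sub_const 1).const_mul A
    simp only [id, mul_one] at this
    exact this.congr_deriv (by ring)
  refine image_norm_le_of_norm_deriv_right_le_deriv_boundary (a := 0) (b := y)
    (fun t _ => (hder t).continuousAt.continuousWithinAt)
    (fun t _ => (hder t).hasDerivWithinAt) ?_ hB (fun t ht => ?_) ⟨hy, le_rfl⟩
  · simp
  · rw [norm_mul, norm_mul, Complex.norm_I, Complex.norm_real, Real.norm_eq_abs, hε, mul_one,
      mul_one]
    refine (hb _).trans (le_of_eq ?_)
    simp [abs_mul, hε, abs_of_nonneg ht.1]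

/-- Cauchy's theorem in a horizontal strip, for an entire function decaying quadratically there. -/
lemma integral_shift {Φ : ℂ → ℂ} (hΦ : Differentiable ℂ Φ) {K y₀ : ℝ}
    (hK : ∀ x y : ℝ, |y| ≤ |y₀| → ‖Φ (x + y * Complex.I)‖ ≤ K / (1 + x ^ 2)) :
    ∫ x : ℝ, Φ x = ∫ x : ℝ, Φ (x + y₀ * Complex.I) := by
  have hc : ∀ y : ℝ, Continuous fun x : ℝ => Φ (x + y * Complex.I) := fun y =>
    hΦ.continuous.comp (by fun_prop)
  have hi : ∀ y : ℝ, |y| ≤ |y₀| → MeasureTheory.Integrable fun x : ℝ => Φ (x + y * Complex.I) :=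
    fun y hy => integrable_of_moderate (hc y) fun x => hK x y hy
  have hlim : ∀ y : ℝ, |y| ≤ |y₀| → Filter.Tendsto
      (fun R : ℝ => ∫ x in (-R)..R, Φ (x + y * Complex.I)) Filter.atTop
      (nhds (∫ x : ℝ, Φ (x + y * Complex.I))) := fun y hy =>
    MeasureTheory.intervalIntegral_tendsto_integral (hi y hy) Filter.tendsto_neg_atTop_atBot
      Filter.tendsto_id
  -- the vertical sides of the rectangle contribute nothing in the limit
  have hside : ∀ s : ℝ, s ^ 2 = 1 → Filter.Tendsto
      (fun R : ℝ => Complex.I • ∫ y in (0 : ℝ)..y₀, Φ ((s * R : ℝ) + y * Complex.I)) Filter.atTop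
      (nhds 0) := by
    intro s hs
    have ht : Filter.Tendsto (fun R : ℝ => K * (1 + R ^ 2)⁻¹ * |y₀ - 0|) Filter.atTop (nhds 0) := by
      have h1 : Filter.Tendsto (fun R : ℝ => 1 + R ^ 2) Filter.atTop Filter.atTop :=
        Filter.tendsto_atTop_add_const_left _ _ (Filter.tendsto_pow_atTop two_ne_zero)
      simpa using (h1.inv_tendsto_atTop.const_mul K).mul_const |y₀ - 0|
    refine squeeze_zero_norm (fun R => ?_) ht
    rw [norm_smul, Complex.norm_I, one_mul]
    refine intervalIntegral.norm_integral_le_of_norm_le_const fun y hy => ?_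
    have hy' : |y| ≤ |y₀| := by
      have := Set.abs_sub_left_of_mem_uIcc (Set.uIoc_subset_uIcc hy)
      simpa using this
    refine (hK (s * R) y hy').trans (le_of_eq ?_)
    rw [mul_pow, hs, one_mul, div_eq_mul_inv]
  have hrect : ∀ R : ℝ, (∫ x in (-R)..R, Φ (x + (0 : ℝ) * Complex.I)) =
      (∫ x in (-R)..R, Φ (x + y₀ * Complex.I)) -
      Complex.I • (∫ y in (0 : ℝ)..y₀, Φ ((1 * R : ℝ) + y * Complex.I)) +
      Complex.I • ∫ y in (0 : ℝ)..y₀, Φ ((-1 * R : ℝ) + y * Complex.I) := by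
    intro R
    have h := Complex.integral_boundary_rect_eq_zero_of_differentiableOn Φ (-R : ℝ)
      ((R : ℂ) + y₀ * Complex.I) hΦ.differentiableOn
    simp only [Complex.ofReal_re, Complex.ofReal_im, Complex.add_re, Complex.add_im,
      Complex.mul_re, Complex.mul_im, Complex.I_re, Complex.I_im, mul_zero, mul_one,
      sub_zero, add_zero, zero_add] at h
    rw [one_mul, neg_one_mul]
    linear_combination h
  have h0 := hlim 0 (by simp)
  simp_rw [hrect] at h0
  have h1 := ((hlim y₀ le_rfl).sub (hside 1 (by norm_num))).add (hside (-1) (by norm_num))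
  have h2 := tendsto_nhds_unique h0 h1
  simpa using h2

/-! ### Spectral decay -/

/-- Spectral decay of the amplitude-time function `h(u) = g⁻¹(u) − u/α`:
`|ĥ(ξ)| ≤ C e^{−2π|ξ|b}` for every `0 ≤ b < a`. -/
theorem spectral_decay_of_h
    (f : ℝ → ℝ) (σ A α : ℝ) (hσ : 0 < σ) (hA : 0 < A)
    (hf : Continuous f) (hbl : Bandlimited σ f)
    (hdecay : ∀ t : ℝ, |f t| ≤ A / (1 + t ^ 2))
    (hα : A * σ < |α|) :
    Function.Bijective (fun t : ℝ => α * t + f t) ∧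
    ∀ b : ℝ, 0 ≤ b →
      b < (|α| / σ) * Real.log (|α| / (A * σ)) - (|α| - A * σ) / σ →
      ∃ C : ℝ, 0 < C ∧ ∀ ξ : ℝ,
        ‖𝓕 (fun u : ℝ =>
            ((Function.invFun (fun t : ℝ => α * t + f t) u - u / α : ℝ) : ℂ)) ξ‖
          ≤ C * Real.exp (-2 * Real.pi * |ξ| * b) := by
  have hpi := Real.pi_pos
  obtain ⟨F, F', hd, hF'd, hFf, hFdec, hF'b⟩ := exists_extension hσ hA hf hbl hdecay
  have hα0 : 0 < |α| := lt_trans (by positivity) hα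
  have hαne : α ≠ 0 := abs_pos.1 hα0
  set g : ℝ → ℝ := fun t => α * t + f t with hg
  -- on the real line `F'` is the derivative of `f`, and it is at most `A * σ < |α|`
  have hfd : ∀ t : ℝ, HasDerivAt f (F' t).re t := by
    intro t
    have h := (hd t).real_of_complex
    simpa [hFf] using h
  have hF're : ∀ t : ℝ, F' t = ((F' t).re : ℂ) := by
    intro t
    have h1 := (hd t).comp_ofReal
    simp only [hFf] at h1
    exact h1.unique (hfd t).ofReal_comp
  have hf'b : ∀ t : ℝ, |(F' t).re| ≤ A * σ := fun t =>
    (Complex.abs_re_le_norm _).trans (by simpa using hF'b t)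
  have hgd : ∀ t : ℝ, HasDerivAt g (α + (F' t).re) t := by
    intro t
    have := ((hasDerivAt_id t).const_mul α).add (hfd t)
    rw [mul_one] at this
    exact this
  have hfA : ∀ t, |f t| ≤ A := fun t =>
    (hdecay t).trans (div_le_self hA.le (by nlinarith [sq_nonneg t]))
  have hinj : Function.Injective g := by
    intro s t hst
    by_contra hne
    have h1 : ‖f s - f t‖ ≤ A * σ * ‖s - t‖ :=
      Convex.norm_image_sub_le_of_norm_hasDerivWithin_le (s := Set.univ)
        (fun x _ => (hfd x).hasDerivWithinAt) (fun x _ => hf'b x) convex_univ trivial trivial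
    have h2 : f s - f t = -(α * (s - t)) := by
      simp only [hg] at hst
      linarith
    rw [h2, norm_neg, norm_mul, Real.norm_eq_abs α] at h1
    have h3 : 0 < ‖s - t‖ := norm_pos_iff.2 (sub_ne_zero.2 hne)
    exact absurd (le_of_mul_le_mul_right h1 h3) (not_le.2 hα)
  have hsurj : Function.Surjective g := by
    intro u
    have hgc : Continuous g := by fun_prop
    refine mem_range_of_exists_le_of_exists_ge hgc ⟨(u - A) / α, ?_⟩ ⟨(u + A) / α, ?_⟩
    · simp only [hg]
      rw [mul_div_cancel₀ _ hαne]
      linarith [(abs_le.1 (hfA ((u - A) / α))).2]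
    · simp only [hg]
      rw [mul_div_cancel₀ _ hαne]
      linarith [(abs_le.1 (hfA ((u + A) / α))).1]
  refine ⟨⟨hinj, hsurj⟩, fun b _ hba => ?_⟩
  -- the height at which the bound on `|F'|` reaches `|α|`
  set Y : ℝ := Real.log (|α| / (A * σ)) / σ with hY
  have hAσ : 0 < A * σ := by positivity
  have hY0 : 0 ≤ Y := div_nonneg (Real.log_nonneg ((one_le_div hAσ).2 hα.le)) hσ.le
  have hexpY : Real.exp (σ * Y) = |α| / (A * σ) := by
    rw [hY, mul_div_cancel₀ _ hσ.ne', Real.exp_log (by positivity)]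
  set a : ℝ := |α| / σ * Real.log (|α| / (A * σ)) - (|α| - A * σ) / σ with ha
  have haY : a = |α| * Y - A * (Real.exp (σ * Y) - 1) := by
    rw [hexpY, ha, hY]; field_simp
  have hexpy : ∀ y : ℝ, |y| ≤ Y → Real.exp (σ * |y|) ≤ |α| / (A * σ) := by
    intro y hy
    rw [← hexpY]
    gcongr
  have hF'Y : ∀ x y : ℝ, |y| ≤ Y → ‖F' (x + y * Complex.I)‖ ≤ |α| := by
    intro x y hy
    refine (hF'b _).trans ?_
    have h := mul_le_mul_of_nonneg_left (hexpy y hy) hAσ.le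
    rw [mul_div_cancel₀ _ hAσ.ne'] at h
    simpa using h
  have hFsub : ∀ x y : ℝ, ‖F (x + y * Complex.I) - F x‖ ≤ A * (Real.exp (σ * |y|) - 1) := by
    intro x y
    rcases le_total 0 y with h | h
    · have := norm_sub_le_of_deriv_exp hd hF'b (abs_one) x (abs_nonneg y)
      rwa [one_mul, abs_of_nonneg h] at *
    · have := norm_sub_le_of_deriv_exp hd hF'b (ε := -1) (by simp) x (abs_nonneg y)
      rwa [neg_one_mul, abs_of_nonpos h, neg_neg] at *
  have hFim : ∀ x y : ℝ, |(F (x + y * Complex.I)).im| ≤ A * (Real.exp (σ * |y|) - 1) := by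
    intro x y
    have h := (Complex.abs_im_le_norm _).trans (hFsub x y)
    rwa [Complex.sub_im, hFf, Complex.ofReal_im, sub_zero] at h
  set E : ℝ := |α| / σ with hE
  have hE0 : 0 < E := by positivity
  have hAE : ∀ y : ℝ, |y| ≤ Y → A * Real.exp (σ * |y|) ≤ E := by
    intro y hy
    have h := mul_le_mul_of_nonneg_left (hexpy y hy) hA.le
    refine h.trans (le_of_eq ?_)
    rw [hE]; field_simp
  have hFdecY : ∀ x y : ℝ, |y| ≤ Y →
      ‖F (x + y * Complex.I)‖ ≤ E * (1 + Y ^ 2) / (1 + x ^ 2) := by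
    intro x y hy
    set z : ℂ := x + y * Complex.I with hz
    have hzim : z.im = y := by simp [hz]
    have h1 : ‖F z‖ * ‖1 + z ^ 2‖ ≤ E := by
      have := hFdec z
      rw [hzim] at this
      exact this.trans (hAE y hy)
    have h2 : ‖F z‖ ≤ E := by
      have h3 : ‖F z‖ ≤ ‖F z - F x‖ + ‖F x‖ := by
        simpa using norm_add_le (F z - F x) (F x)
      have h4 : ‖F x‖ ≤ A := by rw [hFf, Complex.norm_real]; exact hfA x
      have h5 := hFsub x y
      have h6 := hAE y hy
      rw [← hz] at h5
      linarith
    have h3 : 1 + x ^ 2 ≤ ‖1 + z ^ 2‖ + Y ^ 2 := by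
      have h4 : (1 + z ^ 2).re = 1 + x ^ 2 - y ^ 2 := by
        simp [hz, sq]; ring
      have h5 := Complex.re_le_norm (1 + z ^ 2)
      have h6 : y ^ 2 ≤ Y ^ 2 := sq_le_sq.2 (by rwa [abs_of_nonneg hY0])
      linarith
    rw [le_div_iff₀ (by positivity)]
    calc ‖F z‖ * (1 + x ^ 2) ≤ ‖F z‖ * (‖1 + z ^ 2‖ + Y ^ 2) := by gcongr
      _ = ‖F z‖ * ‖1 + z ^ 2‖ + ‖F z‖ * Y ^ 2 := by ring
      _ ≤ E + E * Y ^ 2 := by gcongr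
      _ = _ := by ring
  -- the integrand after the substitution `u = g t`, as an entire function
  let Φ : ℝ → ℂ → ℂ := fun ξ z => -(1 / ((|α| : ℝ) : ℂ)) * F z *
    Complex.exp (-2 * Real.pi * ξ * (α * z + F z) * Complex.I) * (α + F' z)
  have hFd : Differentiable ℂ F := fun z => (hd z).differentiableAt
  have hΦd : ∀ ξ, Differentiable ℂ (Φ ξ) := by
    intro ξ
    simp only [Φ]
    fun_prop
  have hΦn : ∀ ξ x y : ℝ, |y| ≤ Y → ‖Φ ξ (x + y * Complex.I)‖ ≤
      2 * E * (1 + Y ^ 2) / (1 + x ^ 2) *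
        Real.exp (2 * Real.pi * (ξ * (α * y + (F (x + y * Complex.I)).im))) := by
    intro ξ x y hy
    set z : ℂ := x + y * Complex.I with hz
    have hzim : z.im = y := by simp [hz]
    have h1 : ‖Complex.exp (-2 * Real.pi * ξ * (α * z + F z) * Complex.I)‖ =
        Real.exp (2 * Real.pi * (ξ * (α * y + (F z).im))) := by
      rw [Complex.norm_exp]
      congr 1
      have : -2 * (Real.pi : ℂ) * ξ * (α * z + F z) * Complex.I =
          ((-2 * Real.pi * ξ : ℝ) : ℂ) * ((α * z + F z) * Complex.I) := by push_cast; ring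
      rw [this, Complex.re_ofReal_mul]
      simp [hzim]
      ring
    have h2 : ‖(α : ℂ) + F' z‖ ≤ 2 * |α| := by
      refine (norm_add_le _ _).trans ?_
      rw [Complex.norm_real, Real.norm_eq_abs, two_mul]
      exact add_le_add le_rfl (hF'Y x y hy)
    have h3 : ‖-(1 / ((|α| : ℝ) : ℂ))‖ = 1 / |α| := by simp
    simp only [Φ]
    rw [norm_mul, norm_mul, norm_mul, h1, h3]
    have h4 := hFdecY x y hy
    calc _ ≤ 1 / |α| * (E * (1 + Y ^ 2) / (1 + x ^ 2)) *
          Real.exp (2 * Real.pi * (ξ * (α * y + (F z).im))) * (2 * |α|) := by gcongr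
      _ = _ := by field_simp
  have hcov : ∀ ξ : ℝ, 𝓕 (fun u : ℝ => ((Function.invFun g u - u / α : ℝ) : ℂ)) ξ =
      ∫ t : ℝ, Φ ξ t := by
    intro ξ
    rw [Real.fourier_real_eq_integral_exp_smul]
    have h := MeasureTheory.integral_image_eq_integral_abs_deriv_smul MeasurableSet.univ
      (fun t _ => (hgd t).hasDerivWithinAt) hinj.injOn
      (fun u : ℝ => Complex.exp (((-2 * Real.pi * u * ξ : ℝ) : ℂ) * Complex.I) •
        ((Function.invFun g u - u / α : ℝ) : ℂ))
    rw [Set.image_univ, hsurj.range_eq, MeasureTheory.setIntegral_univ,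
      MeasureTheory.setIntegral_univ] at h
    rw [h]
    refine MeasureTheory.integral_congr_ae (Filter.Eventually.of_forall fun t => ?_)
    simp only
    rw [Function.leftInverse_invFun hinj t]
    have h1 : t - g t / α = -(f t / α) := by
      simp only [hg]; field_simp; ring
    -- `g'` has constant sign, that of `α`
    have h2 : |α + (F' t).re| / α = (α + (F' t).re) / |α| := by
      have h3 := abs_le.1 (hf'b t)
      rw [div_eq_div_iff hαne hα0.ne']
      rcases lt_or_gt_of_ne hαne with h | h
      · rw [abs_of_neg h] at hα ⊢
        rw [abs_of_neg (by linarith)]; ring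
      · rw [abs_of_pos h] at hα ⊢
        rw [abs_of_pos (by linarith)]
    have h5 : ((|α + (F' t).re| / α : ℝ) : ℂ) = (((α + (F' t).re) / |α| : ℝ) : ℂ) := by rw [h2]
    push_cast at h5
    rw [h1]
    simp only [Φ]
    rw [hFf, hF're t, Complex.real_smul, smul_eq_mul]
    have h6 : (((-2 * Real.pi * g t * ξ : ℝ) : ℂ) * Complex.I) =
        -2 * Real.pi * ξ * (α * t + f t) * Complex.I := by
      simp only [hg]; push_cast; ring
    rw [h6]
    push_cast
    linear_combination
      (-(f t : ℂ) * Complex.exp (-2 * Real.pi * ξ * (α * t + f t) * Complex.I)) * h5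
  have hK : 0 < 2 * E * (1 + Y ^ 2) := by positivity
  refine ⟨2 * E * (1 + Y ^ 2) * Real.pi, by positivity, fun ξ => ?_⟩
  rw [hcov]
  -- shift upwards or downwards according to the sign of `ξ * α`
  obtain ⟨y, hy, hsign⟩ : ∃ y : ℝ, |y| = Y ∧ ξ * (α * y) = -(|ξ| * (|α| * Y)) := by
    rcases le_total 0 (ξ * α) with h | h
    · refine ⟨-Y, by rw [abs_neg, abs_of_nonneg hY0], ?_⟩
      rw [← mul_assoc |ξ|, ← abs_mul, abs_of_nonneg h]; ring
    · refine ⟨Y, abs_of_nonneg hY0, ?_⟩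
      rw [← mul_assoc |ξ|, ← abs_mul, abs_of_nonpos h]; ring
  rw [integral_shift (hΦd ξ) (y₀ := y) (K := 2 * E * (1 + Y ^ 2) *
    Real.exp (2 * Real.pi * (|ξ| * (|α| * Y + E))))]
  · have hbound : ∀ x : ℝ, ‖Φ ξ (x + y * Complex.I)‖ ≤
        2 * E * (1 + Y ^ 2) * Real.exp (-2 * Real.pi * |ξ| * b) * (1 + x ^ 2)⁻¹ := by
      intro x
      refine (hΦn ξ x y hy.le).trans ?_
      have h1 : ξ * (F (x + y * Complex.I)).im ≤ |ξ| * (A * (Real.exp (σ * Y) - 1)) := by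
        refine (le_abs_self _).trans ?_
        rw [abs_mul, ← hy]
        exact mul_le_mul_of_nonneg_left (hFim x y) (abs_nonneg _)
      have h2 : ξ * (α * y + (F (x + y * Complex.I)).im) ≤ -(|ξ| * b) := by
        have h3 : |ξ| * b ≤ |ξ| * a := mul_le_mul_of_nonneg_left hba.le (abs_nonneg _)
        rw [haY] at h3
        rw [mul_add, hsign]
        nlinarith
      have h3 : Real.exp (2 * Real.pi * (ξ * (α * y + (F (x + y * Complex.I)).im))) ≤
          Real.exp (-2 * Real.pi * |ξ| * b) := by
        rw [Real.exp_le_exp]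
        nlinarith
      calc _ ≤ 2 * E * (1 + Y ^ 2) / (1 + x ^ 2) * Real.exp (-2 * Real.pi * |ξ| * b) := by gcongr
        _ = _ := by rw [div_eq_mul_inv]; ring
    refine (MeasureTheory.norm_integral_le_of_norm_le (integrable_inv_one_add_sq.const_mul _)
      (Filter.Eventually.of_forall hbound)).trans (le_of_eq ?_)
    rw [MeasureTheory.integral_const_mul, integral_univ_inv_one_add_sq]
    ring
  · intro x v hv
    rw [hy] at hv
    refine (hΦn ξ x v hv).trans ?_
    have h1 : ξ * (α * v + (F (x + v * Complex.I)).im) ≤ |ξ| * (|α| * Y + E) := by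
      refine (le_abs_self _).trans ?_
      rw [abs_mul]
      refine mul_le_mul_of_nonneg_left ((abs_add_le _ _).trans ?_) (abs_nonneg _)
      rw [abs_mul]
      have h2 := hFim x v
      have h3 := hAE v hv
      have h4 := mul_le_mul_of_nonneg_left hv hα0.le
      linarith
    rw [mul_div_right_comm _ (Real.exp _)]
    gcongr
end

section
/- Let f : ℝ → ℝ be continuous, bandlimited to σ rad/s (σ > 0), satisfy |f(t)| ≤ A/(1+t²) for all t ∈ ℝ and some A > 0, and suppose f is not constant. For each α > Aσ let g_α(t) = αt + f(t) and h_α(u) = g_α⁻¹(u) − u/α. Then the set of values α > Aσ for which h_α is bandlimited (to any finite bandwidth) contains at most one element; i.e., h_α is nonbandlimited for every α > Aσ with at most one exception. -/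
/-!
For every admissible `α` the function `h_α` fails to be bandlimited, so the exceptional set is in
fact empty.

By Fourier inversion, a continuous integrable bandlimited function is the restriction to `ℝ` of an
entire function (`exists_entire_extension`). Suppose `h_α` is bandlimited. Both `f` and `h_α` then
extend, hence so do `g_α(t) = α t + f(t)` and its inverse `g_α⁻¹(u) = u / α + h_α(u)`, and by the
identity theorem the two extensions are mutually inverse on `ℂ`. An entire function with an entire
inverse is affine (`affine_of_entire_inverse`), so `f` is affine; being bounded, it is constant.

Applying Fourier inversion to `h_α` requires `h_α` to be continuous and integrable, which rests on
`g_α` being strictly increasing. This is Bernstein's inequality `|f'| ≤ A σ` with its sharp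
constant (`bernstein_inequality`), proved through M. Riesz's interpolation formula
`f'(t) = ∑ₖ aₖ (f(t + sₖ) - f(t - sₖ))`, where `∑ₖ |aₖ| ≤ σ / 2`. That formula comes from the
Fourier series of the triangle wave that coincides with `ω ↦ ω` on `[-σ, σ]`.
-/

open Real FourierTransform

open MeasureTheory Filter Topology

/-! ### Entire extension of a bandlimited function -/

/-- The inverse Fourier integral of `φ` at a complex point `z`. It is meaningful for integrable `φ`
of compact support; on real `z` it is the usual inverse Fourier transform. -/
noncomputable def fourierLaplace (φ : ℝ → ℂ) (z : ℂ) : ℂ :=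
  ∫ ξ : ℝ, φ ξ * Complex.exp (2 * π * Complex.I * ξ * z)

lemma norm_exp_kernel_le (ξ : ℝ) (z : ℂ) :
    ‖Complex.exp (2 * π * Complex.I * ξ * z)‖ ≤ Real.exp (2 * π * |ξ| * ‖z‖) := by
  refine (Complex.norm_exp_le_exp_norm _).trans (le_of_eq ?_)
  simp [abs_of_pos Real.pi_pos]

lemma norm_mul_kernel_le {φ : ℝ → ℂ} {σ : ℝ} (hsupp : ∀ ξ : ℝ, σ < 2 * π * |ξ| → φ ξ = 0)
    (ξ : ℝ) (z : ℂ) :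
    ‖φ ξ * Complex.exp (2 * π * Complex.I * ξ * z)‖ ≤ ‖φ ξ‖ * Real.exp (σ * ‖z‖) := by
  rcases lt_or_ge σ (2 * π * |ξ|) with h | h
  · simp [hsupp ξ h]
  · rw [norm_mul]
    have := norm_exp_kernel_le ξ z
    gcongr
    refine this.trans ?_
    gcongr

lemma integrable_mul_kernel {φ : ℝ → ℂ} {σ : ℝ} (hφ : Integrable φ)
    (hsupp : ∀ ξ : ℝ, σ < 2 * π * |ξ| → φ ξ = 0) (z : ℂ) :
    Integrable (fun ξ : ℝ => φ ξ * Complex.exp (2 * π * Complex.I * ξ * z)) := by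
  refine Integrable.mono' (hφ.norm.mul_const (Real.exp (σ * ‖z‖))) ?_
    (ae_of_all _ fun ξ => norm_mul_kernel_le hsupp ξ z)
  exact hφ.1.mul (by fun_prop : Continuous _).aestronglyMeasurable

lemma hasDerivAt_fourierLaplace {φ : ℝ → ℂ} {σ : ℝ} (hσ : 0 < σ) (hφ : Integrable φ)
    (hsupp : ∀ ξ : ℝ, σ < 2 * π * |ξ| → φ ξ = 0) (z : ℂ) :
    HasDerivAt (fourierLaplace φ)
      (∫ ξ : ℝ, φ ξ * (Complex.exp (2 * π * Complex.I * ξ * z) * (2 * π * Complex.I * ξ))) z := by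
  refine (hasDerivAt_integral_of_dominated_loc_of_deriv_le
    (bound := fun ξ => ‖φ ξ‖ * Real.exp (σ * (‖z‖ + 1)) * σ)
    (F' := fun w ξ => φ ξ * (Complex.exp (2 * π * Complex.I * ξ * w) * (2 * π * Complex.I * ξ)))
    (Metric.ball_mem_nhds z one_pos) ?_
    (integrable_mul_kernel hφ hsupp z) ?_ ?_ ?_ ?_).2
  · exact Eventually.of_forall fun w => (integrable_mul_kernel hφ hsupp w).1
  · exact hφ.1.mul (by fun_prop : Continuous _).aestronglyMeasurable
  · refine ae_of_all _ fun ξ w hw => ?_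
    rcases lt_or_ge σ (2 * π * |ξ|) with h | h
    · simp [hsupp ξ h]
    · rw [← mul_assoc, norm_mul]
      have h1 : ‖(2 * π * Complex.I * ξ : ℂ)‖ ≤ σ := by
        simpa [abs_of_pos Real.pi_pos] using h
      have h2 : ‖w‖ ≤ ‖z‖ + 1 := by
        have h3 := norm_add_le z (w - z)
        rw [Metric.mem_ball, dist_eq_norm] at hw
        rw [add_sub_cancel] at h3
        linarith
      refine mul_le_mul ((norm_mul_kernel_le hsupp ξ w).trans ?_) h1 (norm_nonneg _) (by positivity)
      gcongr
  · exact (hφ.norm.mul_const _).mul_const _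
  · refine ae_of_all _ fun ξ w _ => ?_
    have h1 : HasDerivAt (fun w : ℂ => 2 * π * Complex.I * ξ * w) (2 * π * Complex.I * ξ) w := by
      simpa using (hasDerivAt_id w).const_mul (2 * π * Complex.I * ξ : ℂ)
    exact h1.cexp.const_mul (φ ξ)

lemma integrable_fourier_of_bandlimited {f : ℝ → ℝ} {σ : ℝ} (hfi : Integrable f)
    (hbl : Bandlimited σ f) : Integrable (𝓕 (fun t : ℝ => (f t : ℂ))) := by
  have hc : Continuous (𝓕 (fun t : ℝ => (f t : ℂ))) :=
    VectorFourier.fourierIntegral_continuous Real.continuous_fourierChar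
      (by fun_prop) hfi.ofReal
  refine hc.integrable_of_hasCompactSupport ?_
  refine HasCompactSupport.intro (isCompact_closedBall (0 : ℝ) (σ / (2 * π))) fun ξ hξ => ?_
  apply hbl
  rw [Metric.mem_closedBall, dist_zero_right, Real.norm_eq_abs, not_le,
    div_lt_iff₀ (by positivity)] at hξ
  linarith

lemma fourierLaplace_fourier {f : ℝ → ℝ} {σ : ℝ} (hf : Continuous f) (hfi : Integrable f)
    (hbl : Bandlimited σ f) (t : ℝ) :
    fourierLaplace (𝓕 (fun t : ℝ => (f t : ℂ))) t = f t := by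
  have h := congrFun (Continuous.fourierInv_fourier_eq (f := fun t : ℝ => (f t : ℂ))
    (by fun_prop) hfi.ofReal (integrable_fourier_of_bandlimited hfi hbl)) t
  rw [← h, fourierInv_eq', fourierLaplace]
  refine integral_congr_ae (ae_of_all _ fun ξ => ?_)
  simp only [smul_eq_mul]
  rw [mul_comm]
  congr 2
  simp
  ring

/-! ### Bernstein's inequality -/

/-- Fourier series of the triangle wave, obtained by removing the even-index terms from the series
of the Bernoulli polynomial `B₂`. -/
lemma hasSum_odd_cos {x : ℝ} (h0 : 0 ≤ x) (h1 : x ≤ 1 / 2) :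
    HasSum (fun k : ℕ => 1 / (2 * k + 1 : ℝ) ^ 2 * Real.cos (2 * π * (2 * k + 1) * x))
      (π ^ 2 * (1 / 8 - x / 2)) := by
  have B : ∀ y : ℝ, 0 ≤ y → y ≤ 1 →
      HasSum (fun n : ℕ => 1 / (n : ℝ) ^ 2 * Real.cos (2 * π * n * y))
        (π ^ 2 * (y ^ 2 - y + 1 / 6)) := by
    intro y hy0 hy1
    convert! hasSum_one_div_nat_pow_mul_cos one_ne_zero ⟨hy0, hy1⟩ using 1
    simp [Polynomial.bernoulli, Finset.sum_range_succ, Nat.factorial, Nat.choose,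
      bernoulli_eq_bernoulli'_of_ne_one, bernoulli_one]
    ring
  have hS := B x h0 (by linarith)
  have hE : HasSum (fun k : ℕ => 1 / ((2 * k : ℕ) : ℝ) ^ 2 * Real.cos (2 * π * (2 * k : ℕ) * x))
      (1 / 4 * (π ^ 2 * ((2 * x) ^ 2 - 2 * x + 1 / 6))) := by
    convert! (B (2 * x) (by linarith) (by linarith)).mul_left (1 / 4) using 2 with k
    rw [show 2 * π * ((2 * k : ℕ) : ℝ) * x = 2 * π * k * (2 * x) by push_cast; ring]
    push_cast
    ring
  have hO := (hS.summable.comp_injective (i := fun k : ℕ => 2 * k + 1)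
    (fun a b h => by simpa using h)).hasSum
  have h := hS.unique (hE.even_add_odd hO)
  rw [← sub_eq_iff_eq_add'] at h
  rw [← h] at hO
  have e : π ^ 2 * (1 / 8 - x / 2) =
      π ^ 2 * (x ^ 2 - x + 1 / 6) - 1 / 4 * (π ^ 2 * ((2 * x) ^ 2 - 2 * x + 1 / 6)) := by ring
  rw [e]
  simpa [Function.comp_def] using hO

/-- The series of `hasSum_odd_cos` shifted by a quarter period: up to the factor `π² / (8σ)`, an
expansion of the identity function on `[-σ, σ]`. -/
lemma hasSum_odd_sin {σ ω : ℝ} (hσ : 0 < σ) (hω : |ω| ≤ σ) :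
    HasSum (fun k : ℕ => Real.sin ((2 * k + 1) * π / 2) / (2 * k + 1 : ℝ) ^ 2 *
      Real.sin (ω * (π * (2 * k + 1) / (2 * σ)))) (π ^ 2 / 8 * (ω / σ)) := by
  obtain ⟨h1, h2⟩ := abs_le.1 hω
  have h3 : ω / σ ≤ 1 := by rw [div_le_one hσ]; exact h2
  have h4 : -1 ≤ ω / σ := by rw [le_div_iff₀ hσ]; linarith
  have h := hasSum_odd_cos (x := 1 / 4 - ω / σ / 4) (by linarith) (by linarith)
  have e : π ^ 2 * (1 / 8 - (1 / 4 - ω / σ / 4) / 2) = π ^ 2 / 8 * (ω / σ) := by ring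
  rw [e] at h
  convert! h using 2 with k
  have e2 : 2 * π * (2 * k + 1) * (1 / 4 - ω / σ / 4) =
      (2 * k + 1) * π / 2 - ω * (π * (2 * k + 1) / (2 * σ)) := by
    field_simp
    ring
  have e3 : Real.cos ((2 * k + 1) * π / 2) = 0 :=
    Real.cos_eq_zero_iff.2 ⟨k, by push_cast; ring⟩
  rw [e2, Real.cos_sub, e3]
  ring

/-- Coefficient `aₖ` in M. Riesz's formula `f'(t) = ∑ₖ aₖ (f(t + sₖ) - f(t - sₖ))`. The sine
`sin((2k+1)π/2)` is the sign `(-1)ᵏ`. -/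
noncomputable def rieszCoeff (σ : ℝ) (k : ℕ) : ℝ :=
  4 * σ / π ^ 2 * (Real.sin ((2 * k + 1) * π / 2) / (2 * k + 1 : ℝ) ^ 2)

/-- Node `sₖ` in M. Riesz's formula `f'(t) = ∑ₖ aₖ (f(t + sₖ) - f(t - sₖ))`. -/
noncomputable def rieszNode (σ : ℝ) (k : ℕ) : ℝ := π * (2 * k + 1) / (2 * σ)

lemma hasSum_rieszBound (σ : ℝ) :
    HasSum (fun k : ℕ => 4 * σ / π ^ 2 * (1 / (2 * k + 1 : ℝ) ^ 2)) (σ / 2) := by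
  have h := (hasSum_odd_cos (x := 0) le_rfl (by norm_num)).mul_left (4 * σ / π ^ 2)
  simp only [mul_zero, Real.cos_zero, mul_one] at h
  convert! h using 1
  field_simp
  ring

lemma abs_rieszCoeff_le {σ : ℝ} (hσ : 0 < σ) (k : ℕ) :
    |rieszCoeff σ k| ≤ 4 * σ / π ^ 2 * (1 / (2 * k + 1 : ℝ) ^ 2) := by
  have hp : (0 : ℝ) < (2 * k + 1) ^ 2 := by positivity
  rw [rieszCoeff, abs_mul, abs_of_pos (by positivity : 0 < 4 * σ / π ^ 2), abs_div, abs_of_pos hp]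
  gcongr
  exact Real.abs_sin_le_one _

/-- M. Riesz's formula for the derivative of a single exponential of frequency at most `σ`. -/
lemma hasSum_riesz_exp {σ ξ : ℝ} (hσ : 0 < σ) (hξ : 2 * π * |ξ| ≤ σ) (t : ℝ) :
    HasSum (fun k : ℕ => (rieszCoeff σ k : ℂ) *
        (Complex.exp (2 * π * Complex.I * ξ * ((t + rieszNode σ k : ℝ) : ℂ)) -
          Complex.exp (2 * π * Complex.I * ξ * ((t - rieszNode σ k : ℝ) : ℂ))))
      (Complex.exp (2 * π * Complex.I * ξ * t) * (2 * π * Complex.I * ξ)) := by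
  have hω : |2 * π * ξ| ≤ σ := by
    rwa [abs_mul, abs_of_pos (by positivity : 0 < 2 * π)]
  have h := (Complex.hasSum_ofReal.2 (hasSum_odd_sin hσ hω)).mul_left
    (8 * σ / π ^ 2 * Complex.I * Complex.exp (2 * π * Complex.I * ξ * t) : ℂ)
  have hπ : (π : ℂ) ≠ 0 := by exact_mod_cast Real.pi_ne_zero
  have hσ' : (σ : ℂ) ≠ 0 := by exact_mod_cast hσ.ne'
  convert! h using 1
  · ext k
    have e1 : Complex.exp (2 * π * Complex.I * ξ * ((t + rieszNode σ k : ℝ) : ℂ)) =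
        Complex.exp (2 * π * Complex.I * ξ * t) *
          Complex.exp (((2 * π * ξ * rieszNode σ k : ℝ) : ℂ) * Complex.I) := by
      rw [← Complex.exp_add]; congr 1; push_cast; ring
    have e2 : Complex.exp (2 * π * Complex.I * ξ * ((t - rieszNode σ k : ℝ) : ℂ)) =
        Complex.exp (2 * π * Complex.I * ξ * t) *
          Complex.exp (-((2 * π * ξ * rieszNode σ k : ℝ) : ℂ) * Complex.I) := by
      rw [← Complex.exp_add]; congr 1; push_cast; ring
    have e3 : Complex.exp (((2 * π * ξ * rieszNode σ k : ℝ) : ℂ) * Complex.I) -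
        Complex.exp (-((2 * π * ξ * rieszNode σ k : ℝ) : ℂ) * Complex.I) =
        2 * Complex.I * (Real.sin (2 * π * ξ * rieszNode σ k) : ℝ) := by
      rw [Complex.ofReal_sin, Complex.sin]
      ring_nf
      simp only [Complex.I_sq]
      ring
    rw [e1, e2, ← mul_sub, e3, rieszCoeff]
    rw [Complex.ofReal_mul (_ / _ : ℝ) (Real.sin (2 * π * ξ * (_ / _)))]
    rw [rieszNode]
    push_cast
    ring
  · push_cast
    field_simp

/-- **Bernstein's inequality** for continuous integrable real functions, with its sharp constant.
Integrating `hasSum_riesz_exp` against `𝓕 f` gives M. Riesz's formula for `f'`. -/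
lemma bernstein_inequality {f : ℝ → ℝ} {σ A : ℝ} (hσ : 0 < σ) (hf : Continuous f) (hfi : Integrable f)
    (hbl : Bandlimited σ f) (hA : ∀ t, |f t| ≤ A) (t : ℝ) :
    ∃ d, HasDerivAt f d t ∧ |d| ≤ A * σ := by
  set φ : ℝ → ℂ := 𝓕 (fun t : ℝ => (f t : ℂ)) with hφdef
  have hφ : Integrable φ := integrable_fourier_of_bandlimited hfi hbl
  have hF : ∀ t : ℝ, fourierLaplace φ t = f t := fourierLaplace_fourier hf hfi hbl
  have hd := hasDerivAt_fourierLaplace hσ hφ hbl (t : ℂ)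
  set D : ℂ := ∫ ξ : ℝ, φ ξ * (Complex.exp (2 * π * Complex.I * ξ * t) * (2 * π * Complex.I * ξ))
    with hD
  have hK : ∀ (ξ s : ℝ), ‖Complex.exp (2 * π * Complex.I * ξ * (s : ℂ))‖ = 1 := by
    intro ξ s
    have := Complex.norm_exp_ofReal_mul_I (2 * π * ξ * s)
    convert this using 3
    push_cast; ring
  have hsum : HasSum (fun k : ℕ => (rieszCoeff σ k : ℂ) *
      ((f (t + rieszNode σ k) : ℂ) - f (t - rieszNode σ k))) D := by
    have hB := hasSum_rieszBound σ
    have key := hasSum_integral_of_dominated_convergence (μ := volume)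
      (F := fun (k : ℕ) (ξ : ℝ) => (rieszCoeff σ k : ℂ) *
        (φ ξ * Complex.exp (2 * π * Complex.I * ξ * ((t + rieszNode σ k : ℝ) : ℂ)) -
          φ ξ * Complex.exp (2 * π * Complex.I * ξ * ((t - rieszNode σ k : ℝ) : ℂ))))
      (f := fun ξ : ℝ =>
        φ ξ * (Complex.exp (2 * π * Complex.I * ξ * t) * (2 * π * Complex.I * ξ)))
      (fun k ξ => 4 * σ / π ^ 2 * (1 / (2 * k + 1 : ℝ) ^ 2) * (2 * ‖φ ξ‖)) ?_ ?_ ?_ ?_ ?_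
    · convert! key using 2 with k
      rw [integral_const_mul, integral_sub (integrable_mul_kernel hφ hbl _)
        (integrable_mul_kernel hφ hbl _), ← hF, ← hF]
      rfl
    · intro k
      exact (((integrable_mul_kernel hφ hbl _).sub (integrable_mul_kernel hφ hbl _)).const_mul _).1
    · refine fun k => ae_of_all _ fun ξ => ?_
      rw [norm_mul, Complex.norm_real, Real.norm_eq_abs]
      refine mul_le_mul (abs_rieszCoeff_le hσ k) ?_ (norm_nonneg _) (by positivity)
      refine (norm_sub_le _ _).trans ?_
      rw [norm_mul, norm_mul, hK, hK]
      linarith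
    · exact ae_of_all _ fun ξ => hB.summable.mul_right _
    · simp_rw [tsum_mul_right]
      exact (hφ.norm.const_mul 2).const_mul _
    · refine ae_of_all _ fun ξ => ?_
      rcases lt_or_ge σ (2 * π * |ξ|) with h | h
      -- The triangle wave agrees with `ω` only for `|ω| ≤ σ`; outside, `φ` vanishes.
      · have h0 : φ ξ = 0 := hbl ξ h
        simp [h0, hasSum_zero]
      · convert! (hasSum_riesz_exp hσ h t).mul_left (φ ξ) using 2 with k
        ring
  have hDle : ‖D‖ ≤ A * σ := by
    have hB := (hasSum_rieszBound σ).mul_right (2 * A)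
    have e : σ / 2 * (2 * A) = A * σ := by ring
    rw [e] at hB
    refine hsum.norm_le_of_bounded hB fun k => ?_
    rw [norm_mul, Complex.norm_real, Real.norm_eq_abs]
    refine mul_le_mul (abs_rieszCoeff_le hσ k) ?_ (norm_nonneg _) (by positivity)
    refine (norm_sub_le _ _).trans ?_
    rw [Complex.norm_real, Complex.norm_real, Real.norm_eq_abs, Real.norm_eq_abs]
    linarith [hA (t + rieszNode σ k), hA (t - rieszNode σ k)]
  refine ⟨D.re, ?_, (Complex.abs_re_le_norm D).trans hDle⟩
  have := hd.real_of_complex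
  simpa [hF] using this

/-! ### Entire functions with an entire inverse -/

/-- An entire function with an entire inverse is affine. Such a `G` is proper and has a single,
simple zero `a`, so `p(z) = (z - a) / G(z)` is entire and `p(z) = o(z)` at infinity; by Liouville's
theorem `p` is constant. -/
lemma affine_of_entire_inverse {G K : ℂ → ℂ} (hG : Differentiable ℂ G) (hK : Differentiable ℂ K)
    (hKG : ∀ z, K (G z) = z) (hGK : ∀ z, G (K z) = z) : ∃ c d : ℂ, ∀ z, G z = c * z + d := by
  have hinf : Tendsto G (cocompact ℂ) (cocompact ℂ) :=
    (Homeomorph.mk ⟨G, K, hKG, hGK⟩ hG.continuous hK.continuous).isClosedEmbedding.tendsto_cocompact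
  set a := K 0 with ha
  have hGa : G a = 0 := hGK 0
  have hmul : ∀ z, (z - a) * dslope G a z = G z := by
    intro z
    have := sub_smul_dslope G a z
    rwa [hGa, sub_zero, smul_eq_mul] at this
  have hne : ∀ z, dslope G a z ≠ 0 := by
    intro z h0
    have hz : G z = G a := by rw [← hmul z, h0, mul_zero, hGa]
    have hza : z = a := by rw [← hKG z, hz, hKG]
    rw [hza, dslope_same] at h0
    have h1 : HasDerivAt (fun z => K (G z)) (deriv K (G a) * deriv G a) a :=
      (hK (G a)).hasDerivAt.comp a (hG a).hasDerivAt
    have h2 : HasDerivAt (fun z => K (G z)) 1 a := by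
      simpa only [hKG] using hasDerivAt_id' a
    -- A double zero is impossible: the chain rule gives `K'(G a) * G'(a) = 1`.
    have h3 := h1.unique h2
    rw [h0, mul_zero] at h3
    exact zero_ne_one h3
  have hentire : ∀ {F : ℂ → ℂ}, Differentiable ℂ F → Differentiable ℂ (dslope F a) := fun hF =>
    differentiableOn_univ.1
      ((Complex.differentiableOn_dslope univ_mem).2 (differentiableOn_univ.2 hF))
  have hp : Differentiable ℂ (fun z => (dslope G a z)⁻¹) := (hentire hG).inv hne
  set p := fun z => (dslope G a z)⁻¹ with hpdef
  have hinv : Tendsto (fun w : ℂ => w⁻¹) (cocompact ℂ) (𝓝 0) := by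
    rw [← Metric.cobounded_eq_cocompact]
    exact tendsto_inv₀_cobounded
  have hshift : Tendsto (fun z : ℂ => z - a) (cocompact ℂ) (cocompact ℂ) :=
    (Homeomorph.subRight a).isClosedEmbedding.tendsto_cocompact
  -- For `z ≠ a` the difference quotient is `1 / G z - p a / (z - a)`.
  have hlim : Tendsto (dslope p a) (cocompact ℂ) (𝓝 0) := by
    have h := (hinv.comp hinf).sub ((hinv.comp hshift).mul_const (p a))
    rw [zero_mul, sub_zero] at h
    refine h.congr' ?_
    have hev : ∀ᶠ z in cocompact ℂ, z ≠ a := by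
      have := (isCompact_singleton (x := a)).compl_mem_cocompact
      filter_upwards [this] with z hz using hz
    filter_upwards [hev] with z hz
    have hza : z - a ≠ 0 := sub_ne_zero.2 hz
    rw [dslope_of_ne _ hz, slope_def_field]
    simp only [Function.comp_apply]
    rw [← hmul z]
    have := hne z
    simp only [hpdef]
    field_simp
  have hzero := fun z => (hentire hp).apply_eq_of_tendsto_cocompact z hlim
  have hconst : ∀ z, p z = p a := by
    intro z
    have := sub_smul_dslope p a z
    rw [hzero, smul_zero] at this
    exact (sub_eq_zero.1 this.symm)
  refine ⟨dslope G a a, -(a * dslope G a a), fun z => ?_⟩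
  rw [← hmul z, inv_injective (hconst z)]
  ring

lemma entire_eq_of_eq_ofReal {F G : ℂ → ℂ} (hF : Differentiable ℂ F) (hG : Differentiable ℂ G)
    (h : ∀ t : ℝ, F t = G t) (z : ℂ) : F z = G z := by
  refine congrFun (AnalyticOnNhd.eq_of_frequently_eq (z₀ := 0)
    (fun w _ => hF.analyticAt w) (fun w _ => hG.analyticAt w) ?_) z
  have ht : Tendsto (fun t : ℝ => (t : ℂ)) (𝓝[≠] 0) (𝓝[≠] 0) := by
    refine tendsto_nhdsWithin_iff.2 ⟨?_, ?_⟩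
    · exact (Complex.continuous_ofReal.tendsto' 0 0 Complex.ofReal_zero).mono_left
        nhdsWithin_le_nhds
    · filter_upwards [self_mem_nhdsWithin] with t ht
      simpa using ht
  exact ht.frequently (Frequently.of_forall h)

/-! ### Bandlimited inverses -/

lemma integrable_of_decay {f : ℝ → ℝ} {A : ℝ} (hf : Continuous f)
    (hdecay : ∀ t : ℝ, |f t| ≤ A / (1 + t ^ 2)) : Integrable f :=
  (integrable_inv_one_add_sq.const_mul A).mono' hf.aestronglyMeasurable
    (ae_of_all _ fun t => by simpa [div_eq_mul_inv] using hdecay t)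

lemma exists_entire_extension {f : ℝ → ℝ} {σ : ℝ} (hσ : 0 < σ) (hf : Continuous f)
    (hfi : Integrable f) (hbl : Bandlimited σ f) :
    ∃ F : ℂ → ℂ, Differentiable ℂ F ∧ ∀ t : ℝ, F t = f t :=
  ⟨_, fun z => (hasDerivAt_fourierLaplace hσ (integrable_fourier_of_bandlimited hfi hbl) hbl
    z).differentiableAt, fourierLaplace_fourier hf hfi hbl⟩

/-- A single `α > A σ` with `h_α` bandlimited already forces `f` to be constant. -/
lemma eq_const_of_bandlimited_inverse {f : ℝ → ℝ} {σ A α σ' : ℝ} (hσ : 0 < σ) (hA : 0 < A)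
    (hf : Continuous f) (hbl : Bandlimited σ f) (hdecay : ∀ t : ℝ, |f t| ≤ A / (1 + t ^ 2))
    (hα : A * σ < α) (hσ' : 0 < σ')
    (hbl' : Bandlimited σ' (fun u : ℝ =>
      Function.invFun (fun t : ℝ => α * t + f t) u - u / α)) (t : ℝ) : f t = f 0 := by
  have hα0 : 0 < α := (mul_pos hA hσ).trans hα
  have hfi := integrable_of_decay hf hdecay
  have hfA : ∀ t, |f t| ≤ A := fun t =>
    (hdecay t).trans (div_le_self hA.le (by nlinarith [sq_nonneg t]))
  set g : ℝ → ℝ := fun t => α * t + f t with hg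
  have hgc : Continuous g := by fun_prop
  have hmono : StrictMono g := by
    refine strictMono_of_deriv_pos fun t => ?_
    obtain ⟨d, hd, hle⟩ := bernstein_inequality hσ hf hfi hbl hfA t
    have hgd : HasDerivAt g (α * 1 + d) t := ((hasDerivAt_id t).const_mul α).add hd
    rw [hgd.deriv]
    linarith [(abs_le.1 hle).1]
  have htop : Tendsto g atTop atTop :=
    tendsto_atTop_mono (fun t => add_le_add_right (abs_le.1 (hfA t)).1 (α * t))
      (tendsto_atTop_add_const_right _ (-A) (tendsto_id.const_mul_atTop hα0))
  have hbot : Tendsto g atBot atBot :=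
    tendsto_atBot_mono (fun t => add_le_add_right (abs_le.1 (hfA t)).2 (α * t))
      (tendsto_atBot_add_const_right _ A (tendsto_id.const_mul_atBot hα0))
  have hsurj : Function.Surjective g := hgc.surjective htop hbot
  set k : ℝ → ℝ := Function.invFun g with hk
  have hgk : ∀ u, g (k u) = u := Function.rightInverse_invFun hsurj
  have hkg : ∀ t, k (g t) = t := Function.leftInverse_invFun hmono.injective
  have hkc : Continuous k := by
    have : k = (hmono.orderIsoOfSurjective g hsurj).symm := by
      ext u
      apply hmono.injective
      rw [hgk, hmono.orderIsoOfSurjective_self_symm_apply g hsurj]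
    rw [this]
    exact OrderIso.continuous _
  set h : ℝ → ℝ := fun u => k u - u / α with hh
  have hhc : Continuous h := by fun_prop
  have hhf : ∀ u, h u = -f (k u) / α := by
    intro u
    have := hgk u
    simp only [hg] at this
    simp only [hh]
    field_simp
    linarith
  -- `|h u| = |f (k u)| / α`, and `u = α (k u) + f (k u)` has the same order of growth as `k u`,
  -- so the quadratic decay of `f` passes to `h`.
  have hhdecay : ∀ u, |h u| ≤ (A / α * (1 + 2 * α ^ 2 + 2 * A ^ 2)) / (1 + u ^ 2) := by
    intro u
    have hu : u ^ 2 ≤ 2 * α ^ 2 * k u ^ 2 + 2 * A ^ 2 := by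
      have h1 : f (k u) ^ 2 ≤ A ^ 2 := sq_le_sq' (abs_le.1 (hfA _)).1 (abs_le.1 (hfA _)).2
      have h2 : u = α * k u + f (k u) := (hgk u).symm
      have h3 : u ^ 2 = (α * k u + f (k u)) ^ 2 := by rw [← h2]
      nlinarith [sq_nonneg (α * k u - f (k u))]
    rw [hhf, abs_div, abs_neg, abs_of_pos hα0]
    calc |f (k u)| / α ≤ A / (1 + k u ^ 2) / α := by gcongr; exact hdecay _
      _ = A / α / (1 + k u ^ 2) := by ring
      _ ≤ _ := by
        rw [div_le_div_iff₀ (by positivity) (by positivity), mul_assoc (A / α)]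
        gcongr
        nlinarith [sq_nonneg (A * k u), sq_nonneg (k u)]
  have hhi := integrable_of_decay hhc hhdecay
  obtain ⟨F, hF, hFf⟩ := exists_entire_extension hσ hf hfi hbl
  obtain ⟨H, hH, hHh⟩ := exists_entire_extension hσ' hhc hhi hbl'
  have hαC : (α : ℂ) ≠ 0 := by exact_mod_cast hα0.ne'
  have hGd : Differentiable ℂ (fun z => α * z + F z) := by fun_prop
  have hKd : Differentiable ℂ (fun z => z / α + H z) := by fun_prop
  have hGr : ∀ t : ℝ, (α : ℂ) * t + F t = (g t : ℝ) := by
    intro t; rw [hFf]; simp [hg]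
  have hKr : ∀ u : ℝ, (u : ℂ) / α + H u = (k u : ℝ) := by
    intro u; rw [hHh]; simp [hh]
  obtain ⟨c, d, hcd⟩ := affine_of_entire_inverse hGd hKd
    (fun z => entire_eq_of_eq_ofReal (hKd.comp hGd) differentiable_id
      (fun t => by simp only [Function.comp_apply, hGr, hKr, hkg, id]) z)
    (fun z => entire_eq_of_eq_ofReal (hGd.comp hKd) differentiable_id
      (fun t => by simp only [Function.comp_apply, hGr, hKr, hgk, id]) z)
  have hlin : ∀ t : ℝ, (f t : ℂ) - f 0 = (c - α) * t := by
    intro t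
    have h1 := hcd t
    have h2 := hcd (0 : ℝ)
    rw [hFf] at h1 h2
    push_cast at h2
    linear_combination h1 - h2
  have hslope : ‖c - α‖ = 0 := by
    -- Otherwise the linear function `f - f 0` takes a value of size `3 A`, exceeding the bound `2 A`.
    by_contra hne
    have hpos : 0 < ‖c - α‖ := lt_of_le_of_ne (norm_nonneg _) (Ne.symm hne)
    have h1 := congrArg norm (hlin (3 * A / ‖c - α‖))
    rw [norm_mul, Complex.norm_real, Real.norm_eq_abs, abs_of_pos (by positivity),
      mul_div_cancel₀ _ hne, ← Complex.ofReal_sub, Complex.norm_real, Real.norm_eq_abs] at h1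
    have h2 := abs_sub (f (3 * A / ‖c - α‖)) (f 0)
    linarith [hfA (3 * A / ‖c - α‖), hfA 0]
  have h1 := hlin t
  rw [norm_eq_zero.1 hslope, zero_mul, sub_eq_zero] at h1
  exact_mod_cast h1

/-- Unless `f` is constant, `h_α(u) = g_α⁻¹(u) − u/α` is nonbandlimited for every
`α > Aσ` with at most one exception. -/
theorem h_nonbandlimited_except_at_most_one
    (f : ℝ → ℝ) (σ A : ℝ) (hσ : 0 < σ) (hA : 0 < A)
    (hf : Continuous f) (hbl : Bandlimited σ f)
    (hdecay : ∀ t : ℝ, |f t| ≤ A / (1 + t ^ 2))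
    (hnonconst : ¬ ∃ c : ℝ, ∀ t : ℝ, f t = c) :
    Set.Subsingleton {α : ℝ | A * σ < α ∧
      ∃ σ' : ℝ, 0 < σ' ∧
        Bandlimited σ' (fun u : ℝ =>
          Function.invFun (fun t : ℝ => α * t + f t) u - u / α)} := by
  rintro α ⟨hα, σ', hσ', hbl'⟩
  exact (hnonconst ⟨f 0, eq_const_of_bandlimited_inverse hσ hA hf hbl hdecay hα hσ' hbl'⟩).elim
end

section
/- Let f : ℝ → ℝ be continuous, bandlimited to σ rad/s (σ > 0), and satisfy |f(t)| ≤ A/(1+t²) for all t ∈ ℝ and some A > 0. Let α > Aσ, g(t) = αt + f(t), and h(u) = g⁻¹(u) − u/α. Then h is of moderate decrease: h is continuous and there exists A' > 0 such that |h(u)| ≤ A'/(1+u²) for all u ∈ ℝ. -/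
/-!
Everything rests on the sharp Bernstein inequality `|f'| ≤ A σ`, for `|f| ≤ A` and `f`
bandlimited to `σ` (`exists_hasDerivAt_abs_le`). It is proved by M. Riesz's interpolation argument.
By Fourier inversion `f` is, up to a reflection, the Fourier transform of `φ = 𝓕 f`, which is
continuous with support in `2π|ξ| ≤ σ`, so `f'` corresponds to the multiplier `2πξ`. On
`[-σ, σ]` this multiplier is a triangle wave of period `4σ`, that is, a series of
phase-shifted cosines with nonnegative coefficients of total mass `σ` (`hasSum_oddWeight_mul_cos`).
Each cosine multiplier averages two translates of `f` and so does not increase the bound `A`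
(`norm_fourier_cos_mul_le`); summing gives `A σ` (`norm_fourier_deriv_le`).

Hence `g t = α t + f t` has positive derivative, and as `f` is bounded, `g` is an increasing
bijection of `ℝ` with continuous inverse. With `t = g⁻¹ u`, the identity `h u = - f t / α` and the
bound `1 + u² ≤ (1 + 2A² + 2α²) (1 + t²)` turn the decay of `f` in `t` into decay of `h` in `u`.
-/

open Real FourierTransform

open MeasureTheory Filter

/-- Nonnegative weights, supported on the odd integers with value `1 / n²` there. -/
noncomputable def oddWeight (n : ℕ) : ℝ := (1 - (-1) ^ n) / 2 * (1 / (n : ℝ) ^ 2)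

lemma oddWeight_nonneg (n : ℕ) : 0 ≤ oddWeight n := by
  unfold oddWeight
  rcases neg_one_pow_eq_or ℝ n with h | h <;> rw [h] <;> norm_num

lemma hasSum_cos_div_sq {x : ℝ} (hx : x ∈ Set.Icc (0 : ℝ) 1) :
    HasSum (fun n : ℕ => 1 / (n : ℝ) ^ 2 * Real.cos (2 * π * n * x))
      (π ^ 2 * (x ^ 2 - x + 1 / 6)) := by
  have h := hasSum_one_div_nat_pow_mul_cos one_ne_zero hx
  have hB : Polynomial.eval x (Polynomial.map (algebraMap ℚ ℝ) (Polynomial.bernoulli 2))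
      = x ^ 2 - x + 1 / 6 := by
    simp [Polynomial.bernoulli_def, Finset.sum_range_succ, _root_.bernoulli_two, bernoulli_one]
    ring
  rw [mul_one, hB] at h
  have hv : (-1 : ℝ) ^ (1 + 1) * (2 * π) ^ 2 / 2 / (Nat.factorial 2 : ℝ) = π ^ 2 := by
    rw [Nat.factorial_two]; push_cast; ring
  rwa [hv] at h

/-- The Fourier series of the triangle wave. Its even harmonics cancel in the difference of the
series of the quadratic Bernoulli polynomial at `x` and at `x + 1 / 2`. -/
lemma hasSum_oddWeight_mul_cos {x : ℝ} (h0 : 0 ≤ x) (h1 : x ≤ 1 / 2) :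
    HasSum (fun n : ℕ => oddWeight n * Real.cos (2 * π * n * x)) (π ^ 2 / 2 * (1 / 4 - x)) := by
  have ha := hasSum_cos_div_sq (x := x) ⟨h0, by linarith⟩
  have hb := hasSum_cos_div_sq (x := x + 1 / 2) ⟨by linarith, by linarith⟩
  have hterm : (fun n : ℕ => oddWeight n * Real.cos (2 * π * n * x)) = fun n : ℕ =>
      (1 / (n : ℝ) ^ 2 * Real.cos (2 * π * n * x)
        - 1 / (n : ℝ) ^ 2 * Real.cos (2 * π * n * (x + 1 / 2))) / 2 := by
    funext n
    have : Real.cos (2 * π * n * (x + 1 / 2)) = (-1) ^ n * Real.cos (2 * π * n * x) := by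
      rw [← Real.cos_add_nat_mul_pi]; ring_nf
    rw [this, oddWeight]; ring
  have hval : π ^ 2 / 2 * (1 / 4 - x) = (π ^ 2 * (x ^ 2 - x + 1 / 6)
      - π ^ 2 * ((x + 1 / 2) ^ 2 - (x + 1 / 2) + 1 / 6)) / 2 := by
    ring
  rw [hterm, hval]
  exact (ha.sub hb).div_const 2

lemma hasSum_oddWeight : HasSum oddWeight (π ^ 2 / 8) := by
  convert hasSum_oddWeight_mul_cos (x := 0) le_rfl (by norm_num) using 1
  · simp
  · ring

/-- Multiplying `φ` by the cosine of an affine function averages two translates of `𝓕 φ`, up to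
phases, so a uniform bound for `𝓕 φ` is preserved. -/
lemma norm_fourier_cos_mul_le {φ : ℝ → ℂ} (hφ : Integrable φ) {A : ℝ}
    (hA : ∀ y, ‖𝓕 φ y‖ ≤ A) (θ d y : ℝ) :
    ‖𝓕 (fun ξ : ℝ => (Real.cos (θ - 2 * π * ξ * d) : ℂ) * φ ξ) y‖ ≤ A := by
  have hi : ∀ z : ℝ, Integrable
      (fun ξ : ℝ => Complex.exp (↑(-2 * π * ξ * z) * Complex.I) • φ ξ) := by
    intro z
    refine hφ.bdd_mul (c := 1) (by fun_prop) (Eventually.of_forall fun ξ => ?_)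
    rw [Complex.norm_exp_ofReal_mul_I]
  have key : 𝓕 (fun ξ : ℝ => (Real.cos (θ - 2 * π * ξ * d) : ℂ) * φ ξ) y
      = (Complex.exp (θ * Complex.I) / 2) * 𝓕 φ (y + d)
        + (Complex.exp (((-θ : ℝ) : ℂ) * Complex.I) / 2) * 𝓕 φ (y - d) := by
    simp only [Real.fourier_real_eq_integral_exp_smul]
    rw [← integral_const_mul, ← integral_const_mul,
      ← integral_add ((hi _).const_mul _) ((hi _).const_mul _)]
    congr 1
    funext ξ
    have e1 : Complex.exp (↑(-2 * π * ξ * (y + d)) * Complex.I) * Complex.exp (θ * Complex.I)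
        = Complex.exp (↑(-2 * π * ξ * y) * Complex.I)
          * Complex.exp (↑(θ - 2 * π * ξ * d) * Complex.I) := by
      rw [← Complex.exp_add, ← Complex.exp_add]; push_cast; ring_nf
    have e2 : Complex.exp (↑(-2 * π * ξ * (y - d)) * Complex.I)
          * Complex.exp (((-θ : ℝ) : ℂ) * Complex.I)
        = Complex.exp (↑(-2 * π * ξ * y) * Complex.I)
          * Complex.exp (-↑(θ - 2 * π * ξ * d) * Complex.I) := by
      rw [← Complex.exp_add, ← Complex.exp_add]; push_cast; ring_nf
    rw [Complex.ofReal_cos, Complex.cos]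
    simp only [smul_eq_mul]
    linear_combination (-φ ξ / 2) * e1 + (-φ ξ / 2) * e2
  rw [key]
  refine (norm_add_le _ _).trans ?_
  rw [norm_mul, norm_mul, norm_div, norm_div, Complex.norm_exp_ofReal_mul_I,
    Complex.norm_exp_ofReal_mul_I]
  have h1 := hA (y + d)
  have h2 := hA (y - d)
  norm_num
  linarith

/-- **Bernstein's inequality** on the Fourier side: on `[-σ, σ]` the multiplier `2πξ` agrees with
a triangle wave whose Fourier coefficients have absolute sum `σ`. -/
lemma norm_fourier_deriv_le {φ : ℝ → ℂ} (hφ : Integrable φ) {σ A : ℝ} (hσ : 0 < σ)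
    (hsupp : ∀ ξ : ℝ, σ < 2 * π * |ξ| → φ ξ = 0) (hA : ∀ y, ‖𝓕 φ y‖ ≤ A) (y : ℝ) :
    ‖𝓕 (fun ξ : ℝ => (-2 * (π : ℂ) * Complex.I * ξ) • φ ξ) y‖ ≤ A * σ := by
  have hπ := Real.pi_pos
  set c : ℕ → ℝ := fun n => 8 * σ / π ^ 2 * oddWeight n with hc
  have hc0 : ∀ n, 0 ≤ c n := fun n => mul_nonneg (by positivity) (oddWeight_nonneg n)
  have hcs : HasSum c σ := by
    have h := hasSum_oddWeight.mul_left (8 * σ / π ^ 2)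
    rwa [show 8 * σ / π ^ 2 * (π ^ 2 / 8) = σ by field_simp] at h
  let C : ℕ → ℝ → ℂ := fun n ξ =>
    (Real.cos (n * π / 2 - 2 * π * ξ * (n * π / (2 * σ))) : ℂ) * φ ξ
  let G : ℕ → ℝ → ℂ := fun n ξ =>
    (-Complex.I * (c n : ℂ)) * (Complex.exp (↑(-2 * π * ξ * y) * Complex.I) • C n ξ)
  have hG : ∀ n, ∫ ξ, G n ξ = (-Complex.I * (c n : ℂ)) * 𝓕 (C n) y := by
    intro n
    rw [Real.fourier_real_eq_integral_exp_smul, ← integral_const_mul]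
  have hGb : ∀ n ξ, ‖G n ξ‖ ≤ c n * ‖φ ξ‖ := by
    intro n ξ
    simp only [G, C, norm_mul, norm_smul, Complex.norm_exp_ofReal_mul_I, norm_neg, Complex.norm_I,
      Complex.norm_real, one_mul, Real.norm_eq_abs, abs_of_nonneg (hc0 n)]
    refine mul_le_mul_of_nonneg_left ?_ (hc0 n)
    exact mul_le_of_le_one_left (norm_nonneg _) (Real.abs_cos_le_one _)
  have hsum : HasSum (fun n => ∫ ξ, G n ξ)
      (𝓕 (fun ξ : ℝ => (-2 * (π : ℂ) * Complex.I * ξ) • φ ξ) y) := by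
    rw [Real.fourier_real_eq_integral_exp_smul]
    refine hasSum_integral_of_dominated_convergence (fun n ξ => c n * ‖φ ξ‖) ?_ ?_ ?_ ?_ ?_
    · intro n
      have h1 : Continuous fun ξ : ℝ =>
          (Real.cos (n * π / 2 - 2 * π * ξ * (n * π / (2 * σ))) : ℂ) := by fun_prop
      have h2 : Continuous fun ξ : ℝ => Complex.exp (↑(-2 * π * ξ * y) * Complex.I) := by
        fun_prop
      exact (h2.aestronglyMeasurable.smul (h1.aestronglyMeasurable.mul hφ.1)).const_mul _
    · exact fun n => Eventually.of_forall (hGb n)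
    · exact Eventually.of_forall fun ξ => hcs.summable.mul_right _
    · simp_rw [tsum_mul_right]
      exact hφ.norm.const_mul _
    · refine Eventually.of_forall fun ξ => ?_
      by_cases hξ : σ < 2 * π * |ξ|
      · simp [G, C, hsupp ξ hξ, hasSum_zero]
      · have hb : |2 * π * ξ| ≤ σ := by
          rw [abs_mul, abs_of_pos (by positivity : 0 < 2 * π)]; exact not_lt.mp hξ
        obtain ⟨hl, hr⟩ := abs_le.mp hb
        have hx0 : (2 * π * ξ) / (4 * σ) ≤ 1 / 4 := by
          rw [div_le_iff₀ (by positivity)]; linarith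
        have hx1 : -(1 / 4) ≤ (2 * π * ξ) / (4 * σ) := by
          rw [le_div_iff₀ (by positivity)]; linarith
        -- The affine substitution carries `[-σ, σ]` onto `[0, 1 / 2]`.
        have h := (hasSum_oddWeight_mul_cos (x := 1 / 4 - (2 * π * ξ) / (4 * σ))
          (by linarith) (by linarith)).mul_left (8 * σ / π ^ 2)
        have h' := (Complex.hasSum_ofReal.mpr h).mul_left
          (-Complex.I * (Complex.exp (↑(-2 * π * ξ * y) * Complex.I) * φ ξ))
        have hv : 8 * σ / π ^ 2 * (π ^ 2 / 2 * (1 / 4 - (1 / 4 - (2 * π * ξ) / (4 * σ))))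
            = 2 * π * ξ := by
          field_simp; ring
        have hterm : (fun n => G n ξ) = fun n : ℕ =>
            -Complex.I * (Complex.exp (↑(-2 * π * ξ * y) * Complex.I) * φ ξ) *
              ((8 * σ / π ^ 2 * (oddWeight n * Real.cos (2 * π * n *
                (1 / 4 - (2 * π * ξ) / (4 * σ)))) : ℝ) : ℂ) := by
          funext n
          have harg : 2 * π * n * (1 / 4 - (2 * π * ξ) / (4 * σ))
              = n * π / 2 - 2 * π * ξ * (n * π / (2 * σ)) := by
            field_simp; ring
          simp only [G, C, hc, smul_eq_mul, harg]
          push_cast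
          ring
        have hlim : Complex.exp (↑(-2 * π * ξ * y) * Complex.I) •
              (-2 * (π : ℂ) * Complex.I * ξ) • φ ξ
            = -Complex.I * (Complex.exp (↑(-2 * π * ξ * y) * Complex.I) * φ ξ) *
              ((2 * π * ξ : ℝ) : ℂ) := by
          simp only [smul_eq_mul]
          push_cast
          ring
        rw [hv] at h'
        rw [hterm, hlim]
        exact h'
  refine hsum.norm_le_of_bounded (hcs.mul_left A) fun n => ?_
  rw [hG, norm_mul, norm_mul, norm_neg, Complex.norm_I, one_mul, Complex.norm_real,
    Real.norm_eq_abs, abs_of_nonneg (hc0 n), mul_comm A]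
  exact mul_le_mul_of_nonneg_left (norm_fourier_cos_mul_le hφ hA _ _ _) (hc0 n)

/-- **Bernstein's inequality** for bandlimited functions with quadratic decay. -/
lemma exists_hasDerivAt_abs_le {f : ℝ → ℝ} {σ A : ℝ} (hσ : 0 < σ) (hA : 0 < A)
    (hf : Continuous f) (hbl : Bandlimited σ f)
    (hdecay : ∀ t : ℝ, |f t| ≤ A / (1 + t ^ 2)) (t : ℝ) :
    ∃ f' : ℝ, HasDerivAt f f' t ∧ |f'| ≤ A * σ := by
  have hπ := Real.pi_pos
  set fc : ℝ → ℂ := fun t => (f t : ℂ) with hfc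
  have hcont : Continuous fc := by fun_prop
  have hint : Integrable fc := by
    refine (integrable_inv_one_add_sq.const_mul A).mono' hcont.aestronglyMeasurable
      (Eventually.of_forall fun t => ?_)
    simpa [hfc, div_eq_mul_inv] using hdecay t
  set φ : ℝ → ℂ := 𝓕 fc with hφdef
  have hφc : Continuous φ :=
    VectorFourier.fourierIntegral_continuous Real.continuous_fourierChar
      (innerSL ℝ).continuous₂ hint
  have hφs : HasCompactSupport φ := by
    refine HasCompactSupport.intro (isCompact_Icc (a := -(σ / (2 * π))) (b := σ / (2 * π)))
      fun ξ hξ => hbl ξ ?_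
    by_contra hcon
    apply hξ
    rw [Set.mem_Icc, ← abs_le, le_div_iff₀ (by positivity), mul_comm]
    exact not_lt.mp hcon
  have hφi : Integrable φ := hφc.integrable_of_hasCompactSupport hφs
  have hφi' : Integrable fun ξ : ℝ => ξ • φ ξ :=
    (continuous_id.smul hφc).integrable_of_hasCompactSupport hφs.smul_left
  have hinv : ∀ y, 𝓕 φ y = fc (-y) := by
    intro y
    have h := congrFun (hcont.fourierInv_fourier_eq hint hφi) (-y)
    rwa [Real.fourierInv_eq_fourier_neg, neg_neg] at h
  have hbound : ∀ y, ‖𝓕 φ y‖ ≤ A := by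
    intro y
    rw [hinv]
    simp only [hfc, Complex.norm_real, Real.norm_eq_abs]
    exact (hdecay _).trans (div_le_self hA.le (by nlinarith [sq_nonneg (-y)]))
  have hd := Real.hasDerivAt_fourier hφi hφi' (-t)
  have hle := norm_fourier_deriv_le hφi hσ hbl hbound (-t)
  set D := 𝓕 (fun ξ : ℝ => (-2 * (π : ℂ) * Complex.I * ξ) • φ ξ) (-t) with hD
  have hd2 : HasDerivAt fc (-D) t := by
    have h := HasDerivAt.scomp t hd (hasDerivAt_neg t)
    have he : (𝓕 φ) ∘ (fun x : ℝ => -x) = fc := by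
      funext x; simp [hinv]
    have he' : (𝓕 φ) ∘ (Neg.neg : ℝ → ℝ) = fc := he
    simpa [he, he'] using h
  have hd3 : HasDerivAt f (-D).re t := by
    have h := Complex.reCLM.hasFDerivAt.comp_hasDerivAt t hd2
    simpa [hfc, Function.comp_def] using h
  exact ⟨_, hd3, (Complex.abs_re_le_norm _).trans (by rwa [norm_neg])⟩

/-- `h(u) = g⁻¹(u) − u/α` is of moderate decrease: continuous and bounded by
`A'/(1+u²)` for some `A' > 0`. -/
theorem h_moderate_decrease
    (f : ℝ → ℝ) (σ A α : ℝ) (hσ : 0 < σ) (hA : 0 < A)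
    (hf : Continuous f) (hbl : Bandlimited σ f)
    (hdecay : ∀ t : ℝ, |f t| ≤ A / (1 + t ^ 2))
    (hα : A * σ < α) :
    Continuous (fun u : ℝ => Function.invFun (fun t : ℝ => α * t + f t) u - u / α) ∧
    ∃ A' : ℝ, 0 < A' ∧ ∀ u : ℝ,
      |Function.invFun (fun t : ℝ => α * t + f t) u - u / α| ≤ A' / (1 + u ^ 2) := by
  have hα0 : 0 < α := (mul_pos hA hσ).trans hα
  have hfA : ∀ t, |f t| ≤ A := fun t =>
    (hdecay t).trans (div_le_self hA.le (by nlinarith [sq_nonneg t]))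
  set g : ℝ → ℝ := fun t => α * t + f t with hg
  have hmono : StrictMono g := by
    refine strictMono_of_deriv_pos fun t => ?_
    obtain ⟨f', hd, hle⟩ := exists_hasDerivAt_abs_le hσ hA hf hbl hdecay t
    have h : HasDerivAt g (α * 1 + f') t := ((hasDerivAt_id t).const_mul α).add hd
    rw [h.deriv]
    linarith [(abs_le.mp hle).1]
  have hsurj : Function.Surjective g := by
    refine Continuous.surjective (by fun_prop) ?_ ?_
    · exact tendsto_atTop_add_right_of_le _ (-A) (tendsto_id.const_mul_atTop hα0)
        fun t => (abs_le.mp (hfA t)).1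
    · exact tendsto_atBot_add_right_of_ge _ A (tendsto_id.const_mul_atBot hα0)
        fun t => (abs_le.mp (hfA t)).2
  have hright : ∀ u, g (Function.invFun g u) = u := Function.rightInverse_invFun hsurj
  have hcinv : Continuous (Function.invFun g) := by
    let e := hmono.orderIsoOfSurjective g hsurj
    have he : Function.invFun g = e.symm := by
      funext u
      exact (OrderIso.eq_symm_apply e).mpr (hright u)
    rw [he]
    exact e.symm.continuous
  refine ⟨hcinv.sub (continuous_id.div_const α),
    A / α * (1 + 2 * A ^ 2 + 2 * α ^ 2), by positivity, fun u => ?_⟩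
  set t := Function.invFun g u with ht
  have hu : α * t + f t = u := hright u
  have hh : t - u / α = -(f t / α) := by
    rw [← hu]; field_simp; ring
  have hf2 : f t ^ 2 ≤ A ^ 2 := sq_le_sq' (abs_le.mp (hfA t)).1 (abs_le.mp (hfA t)).2
  have hu2 : 1 + u ^ 2 ≤ (1 + 2 * A ^ 2 + 2 * α ^ 2) * (1 + t ^ 2) := by
    rw [← hu]
    nlinarith [sq_nonneg (α * t - f t), sq_nonneg t, sq_nonneg α, sq_nonneg (A * t)]
  rw [hh, abs_neg, abs_div, abs_of_pos hα0, le_div_iff₀ (by positivity)]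
  have hft : |f t| * (1 + t ^ 2) ≤ A := (le_div_iff₀ (by positivity)).mp (hdecay t)
  calc |f t| / α * (1 + u ^ 2)
      ≤ |f t| / α * ((1 + 2 * A ^ 2 + 2 * α ^ 2) * (1 + t ^ 2)) := by gcongr
    _ = (|f t| * (1 + t ^ 2)) / α * (1 + 2 * A ^ 2 + 2 * α ^ 2) := by ring
    _ ≤ A / α * (1 + 2 * A ^ 2 + 2 * α ^ 2) := by gcongr
end

section
/- Let f : ℝ → ℝ be continuous, bandlimited to σ rad/s (σ > 0), and satisfy |f(t)| ≤ A/(1+t²) for all t ∈ ℝ and some A > 0. Let α > Aσ, g(t) = αt + f(t) (a bijection of ℝ), and let a = (α/σ)·log(α/(Aσ)) − (α − Aσ)/σ > 0. Then there exists a holomorphic function G defined on the horizontal strip S_a = {w ∈ ℂ : |Im(w)| < a} such that G(u) = g⁻¹(u) for every real u; i.e., g⁻¹ extends analytically to S_a. -/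
/-!
The proof has three ingredients.

*Paley–Wiener.* By Fourier inversion `f t = ∫ ω in -σ..σ, h ω * exp (I ω t)` with `h` continuous, and
the same formula with complex `t` defines an entire extension `F` of `f`
(`Bandlimited.exists_bandIntegral`, `hasDerivAt_bandIntegral`).

*Bernstein.* Differentiating `F` multiplies `h` by `I ω`. On `[-σ, σ]` the function `ω` agrees with a
triangle wave of period `4σ`, whose Fourier coefficients have absolute sum exactly `σ`
(`hasSum_identity_exp`). Hence `F'` is an absolutely convergent combination of translates of `F`,
and `|F'| ≤ σ sup |F|` on the real line (`norm_bandIntegral_deriv_le`). Iterating,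
`|F⁽ⁿ⁾| ≤ A σⁿ` on the real line, and Taylor expansion at `x` gives
`|F (x + iy) - F x| ≤ A (exp (σ |y|) - 1)` and `|F' (x + iy)| ≤ A σ exp (σ |y|)`.

*Inversion.* Let `φ y = α y - A (exp (σ y) - 1)` and `y* = log (α / (A σ)) / σ`, so that `φ y* = a`.
For `0 < y < y*` the derivative of `F` is at most `L = A σ exp (σ y) < α` on the strip
`|Im z| ≤ y`, and when `|Im w| < φ y` the map `z ↦ (w - F z) / α` sends this strip into itself. It is a
contraction, so `α z + F z = w` has a unique solution `z` there. The solution depends on `w` in a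
Lipschitz way with constant `1 / (α - L)`, hence holomorphically, because `α + F'` does not vanish.
Letting `y` tend to `y*` covers the strip `|Im w| < a`.
-/

open Real FourierTransform

/-! ### The integral representation of band-limited functions -/

/-- The exponential integral `z ↦ ∫ ω in -σ..σ, h ω * exp (I ω z)`, that is, the function on `ℂ` with
spectral density `h` on the band `[-σ, σ]` (angular frequency). -/
noncomputable def bandIntegral (σ : ℝ) (h : ℝ → ℂ) (z : ℂ) : ℂ :=
  ∫ ω in (-σ)..σ, h ω * Complex.exp (Complex.I * ω * z)

theorem hasDerivAt_bandIntegral (σ : ℝ) {h : ℝ → ℂ} (hh : Continuous h) (z : ℂ) :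
    HasDerivAt (bandIntegral σ h) (bandIntegral σ (fun ω => Complex.I * ω * h ω) z) z := by
  have key := intervalIntegral.hasDerivAt_integral_of_dominated_loc_of_deriv_le
    (μ := MeasureTheory.volume) (a := -σ) (b := σ)
    (F := fun (z : ℂ) (ω : ℝ) => h ω * Complex.exp (Complex.I * ω * z))
    (F' := fun (z : ℂ) (ω : ℝ) => Complex.I * ω * h ω * Complex.exp (Complex.I * ω * z))
    (x₀ := z) (s := Metric.ball z 1)
    (bound := fun ω => ‖Complex.I * ω * h ω‖ * Real.exp (|ω| * (‖z‖ + 1)))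
    (Metric.ball_mem_nhds z one_pos)
    (Filter.Eventually.of_forall fun w => (by fun_prop : Continuous _).aestronglyMeasurable)
    ((by fun_prop : Continuous _).intervalIntegrable _ _)
    ((by fun_prop : Continuous _).aestronglyMeasurable) ?_
    ((by fun_prop : Continuous _).intervalIntegrable _ _) ?_
  · exact key.2
  · refine Filter.Eventually.of_forall fun ω _ w hw => ?_
    rw [norm_mul]
    gcongr
    refine (Complex.norm_exp_le_exp_norm _).trans (Real.exp_le_exp.2 ?_)
    have h2 : ‖w‖ ≤ ‖z‖ + 1 := by
      have h3 : ‖w - z‖ < 1 := by simpa [dist_eq_norm] using hw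
      have h4 := norm_le_norm_add_norm_sub' w z
      linarith
    simp only [norm_mul, Complex.norm_I, one_mul, Complex.norm_real, Real.norm_eq_abs]
    gcongr
  · refine Filter.Eventually.of_forall fun ω _ w _ => ?_
    have h1 : HasDerivAt (fun w : ℂ => Complex.I * ω * w) (Complex.I * ω) w := by
      simpa using (hasDerivAt_id w).const_mul (Complex.I * (ω : ℂ))
    exact ((h1.cexp).const_mul (h ω)).congr_deriv (by ring)

/-- Paley–Wiener for continuous integrable functions: Fourier inversion, written in angular
frequency. -/
theorem Bandlimited.exists_bandIntegral {σ : ℝ} {f : ℝ → ℝ} (hσ : 0 < σ) (hf : Continuous f)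
    (hint : MeasureTheory.Integrable f) (hbl : Bandlimited σ f) :
    ∃ h : ℝ → ℂ, Continuous h ∧ ∀ t : ℝ, bandIntegral σ h t = f t := by
  have hintC : MeasureTheory.Integrable (fun t : ℝ => (f t : ℂ)) := hint.ofReal
  have hcont : Continuous (𝓕 (fun t : ℝ => (f t : ℂ))) :=
    VectorFourier.fourierIntegral_continuous Real.continuous_fourierChar
      (by exact continuous_inner) hintC
  set H := 𝓕 (fun t : ℝ => (f t : ℂ)) with hH
  have hpi := Real.pi_pos
  have hsupp : ∀ ξ, ξ ∉ Set.Ioc (-σ / (2 * π)) (σ / (2 * π)) → H ξ = 0 := by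
    -- The strict support condition misses the endpoint `ξ = -σ / (2π)`; continuity of `H` covers it.
    have h1 : ∀ ξ, ξ ∉ Set.Icc (-σ / (2 * π)) (σ / (2 * π)) → H ξ = 0 := by
      intro ξ hξ
      apply hbl
      by_contra! hc
      apply hξ
      have h3 : |ξ| ≤ σ / (2 * π) := by
        rw [le_div_iff₀ (by positivity)]; linarith
      rw [abs_le, ← neg_div] at h3
      exact h3
    have h2 : Set.Iic (-σ / (2 * π)) ⊆ {ξ | H ξ = 0} := by
      rw [← closure_Iio]
      refine closure_minimal (fun ξ hξ => h1 ξ fun hc => ?_)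
        (isClosed_eq hcont continuous_const)
      exact absurd hc.1 (not_le.2 hξ)
    intro ξ hξ
    by_cases h3 : ξ ≤ -σ / (2 * π)
    · exact h2 h3
    · exact h1 ξ fun hc => hξ ⟨not_le.1 h3, hc.2⟩
  have hHint : MeasureTheory.Integrable H := by
    refine hcont.integrable_of_hasCompactSupport
      (HasCompactSupport.intro (isCompact_Icc (a := -σ / (2 * π)) (b := σ / (2 * π)))
        fun ξ hξ => hsupp ξ fun hc => hξ ⟨hc.1.le, hc.2⟩)
  refine ⟨fun ω => (2 * π : ℂ)⁻¹ * H (ω / (2 * π)), by fun_prop, fun t => ?_⟩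
  have hinv := hintC.fourierInv_fourier_eq hHint (v := t) (by fun_prop)
  rw [← hH, Real.fourierInv_eq'] at hinv
  rw [← hinv, bandIntegral]
  have hle : -σ / (2 * π) ≤ σ / (2 * π) := by gcongr; linarith
  have hset : ∫ v : ℝ, Complex.exp (((2 * π * inner ℝ v t : ℝ) : ℂ) * Complex.I) • H v
      = ∫ v in (-σ / (2 * π))..(σ / (2 * π)),
        Complex.exp (((2 * π * inner ℝ v t : ℝ) : ℂ) * Complex.I) • H v := by
    rw [intervalIntegral.integral_of_le hle]
    refine (MeasureTheory.setIntegral_eq_integral_of_forall_compl_eq_zero fun v hv => ?_).symm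
    rw [hsupp v hv, smul_zero]
  rw [hset]
  have hsub := intervalIntegral.integral_comp_div (a := -σ) (b := σ) (c := 2 * π)
    (fun v : ℝ => Complex.exp (((2 * π * inner ℝ v t : ℝ) : ℂ) * Complex.I) • H v) (by positivity)
  have hsub' := (inv_smul_eq_iff₀ (by positivity : (2 * π : ℝ) ≠ 0)).2 hsub
  rw [← hsub', ← intervalIntegral.integral_smul]
  refine intervalIntegral.integral_congr fun ω _ => ?_
  have hpiC : (π : ℂ) ≠ 0 := by exact_mod_cast hpi.ne'
  have hexp : ((2 * π * inner ℝ (ω / (2 * π)) t : ℝ) : ℂ) * Complex.I = Complex.I * ω * t := by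
    simp only [RCLike.inner_apply, conj_trivial]
    push_cast
    field_simp
  simp only [hexp, smul_eq_mul, Complex.real_smul]
  push_cast
  ring

/-! ### Bernstein's inequality -/

/-- The triangle wave, from the Fourier series of the Bernoulli polynomial `B₂`: the odd-index part of
`∑ cos (2πnx) / n²` is the full series at `x` minus a quarter of the full series at `2x`. -/
theorem hasSum_triangle_wave {x : ℝ} (hx : x ∈ Set.Icc (0 : ℝ) (1 / 2)) :
    HasSum (fun k : ℕ => 1 / (2 * k + 1 : ℝ) ^ 2 * Real.cos (2 * π * (2 * k + 1) * x))
      (π ^ 2 / 8 * (1 - 4 * x)) := by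
  have hB : ∀ y ∈ Set.Icc (0 : ℝ) 1,
      HasSum (fun n : ℕ => 1 / (n : ℝ) ^ 2 * Real.cos (2 * π * n * y))
        (π ^ 2 * (y ^ 2 - y + 6⁻¹)) := by
    intro y hy
    have h := hasSum_one_div_nat_pow_mul_cos (k := 1) one_ne_zero hy
    have h2 : Polynomial.eval y (Polynomial.map (algebraMap ℚ ℝ) (Polynomial.bernoulli (2 * 1)))
        = y ^ 2 - y + 6⁻¹ := bernoulliFun_two y
    rw [h2] at h
    convert h using 1
    norm_num [Nat.factorial]
    left
    ring
  have hfull := hB x ⟨hx.1, by linarith [hx.2]⟩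
  have heven : HasSum (fun k : ℕ => 1 / ((2 * k : ℕ) : ℝ) ^ 2 *
      Real.cos (2 * π * ((2 * k : ℕ) : ℝ) * x)) (π ^ 2 * ((2 * x) ^ 2 - 2 * x + 6⁻¹) / 4) := by
    have h := (hB (2 * x) ⟨by linarith [hx.1], by linarith [hx.2]⟩).div_const 4
    refine (funext fun k => ?_ : _ = fun k : ℕ => _) ▸ h
    push_cast
    ring_nf
  have hodd : Summable (fun k : ℕ => 1 / ((2 * k + 1 : ℕ) : ℝ) ^ 2 *
      Real.cos (2 * π * ((2 * k + 1 : ℕ) : ℝ) * x)) :=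
    hfull.summable.comp_injective (i := fun k : ℕ => 2 * k + 1) fun a b hab => by
      simpa using hab
  have hsum := hfull.unique (heven.even_add_odd hodd.hasSum)
  have hval : π ^ 2 / 8 * (1 - 4 * x) = ∑' k : ℕ, 1 / ((2 * k + 1 : ℕ) : ℝ) ^ 2 *
      Real.cos (2 * π * ((2 * k + 1 : ℕ) : ℝ) * x) := by
    linarith
  rw [hval]
  simpa using hodd.hasSum

/-- On `[-σ, σ]` the identity is an absolutely convergent series of exponentials whose
coefficients have absolute sum `σ`. -/
theorem hasSum_identity_exp {σ : ℝ} (hσ : 0 < σ) :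
    ∃ (b : ℕ → ℝ) (c : ℕ → ℂ) (τ : ℕ → ℝ), HasSum b σ ∧ (∀ k, 0 ≤ b k) ∧ (∀ k, ‖c k‖ = 1) ∧
      ∀ ω ∈ Set.Icc (-σ) σ, HasSum (fun k => (b k : ℂ) / 2 *
        (c k * Complex.exp (Complex.I * ω * (-τ k : ℝ))
          + (c k)⁻¹ * Complex.exp (Complex.I * ω * (τ k : ℝ)))) (ω : ℂ) := by
  have hpi := Real.pi_pos
  refine ⟨fun k => 8 * σ / π ^ 2 * (1 / (2 * k + 1 : ℝ) ^ 2),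
    fun k => Complex.exp (((2 * k + 1) * π / 2 : ℝ) * Complex.I),
    fun k => (2 * k + 1) * π / (2 * σ), ?_, fun k => by positivity,
    fun k => Complex.norm_exp_ofReal_mul_I _, fun ω hω => ?_⟩
  · have h := (hasSum_triangle_wave (x := 0) ⟨le_rfl, by norm_num⟩).mul_left (8 * σ / π ^ 2)
    have h1 : 8 * σ / π ^ 2 * (π ^ 2 / 8 * (1 - 4 * 0)) = σ := by field_simp; norm_num
    rw [h1] at h
    simpa using h
  · have hx : (1 - ω / σ) / 4 ∈ Set.Icc (0 : ℝ) (1 / 2) := by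
      have h1 : ω / σ ≤ 1 := (div_le_one hσ).2 hω.2
      have h2 : -1 ≤ ω / σ := by rw [le_div_iff₀ hσ]; linarith [hω.1]
      constructor <;> linarith
    have h := (hasSum_triangle_wave hx).mul_left (8 * σ / π ^ 2)
    have h1 : 8 * σ / π ^ 2 * (π ^ 2 / 8 * (1 - 4 * ((1 - ω / σ) / 4))) = ω := by
      field_simp; ring
    rw [h1] at h
    convert Complex.hasSum_ofReal.2 h using 1
    funext k
    rw [← Complex.exp_neg, ← Complex.exp_add, ← Complex.exp_add]
    have hσC : (σ : ℂ) ≠ 0 := by exact_mod_cast hσ.ne'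
    push_cast
    rw [Complex.cos]
    have e1 : (2 * π * (2 * k + 1) * ((1 - ω / σ) / 4) : ℂ) * Complex.I
        = (2 * k + 1) * π / 2 * Complex.I
          + Complex.I * ω * -((2 * k + 1) * π / (2 * σ)) := by
      field_simp
      ring
    have e2 : -(2 * π * (2 * k + 1) * ((1 - ω / σ) / 4) : ℂ) * Complex.I
        = -((2 * k + 1) * π / 2 * Complex.I)
          + Complex.I * ω * ((2 * k + 1) * π / (2 * σ)) := by
      field_simp
      ring
    rw [e1, e2]
    ring

/-- Bernstein's inequality: the derivative is a combination of translates with total weight `σ`. -/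
theorem norm_bandIntegral_deriv_le {σ M : ℝ} (hσ : 0 < σ) {h : ℝ → ℂ} (hh : Continuous h)
    (hM : ∀ x : ℝ, ‖bandIntegral σ h x‖ ≤ M) (x : ℝ) :
    ‖bandIntegral σ (fun ω => Complex.I * ω * h ω) x‖ ≤ M * σ := by
  obtain ⟨b, c, τ, hb, hb0, hc, hid⟩ := hasSum_identity_exp hσ
  have hcinv : ∀ k, ‖(c k)⁻¹‖ = 1 := fun k => by rw [norm_inv, hc, inv_one]
  have hnexp : ∀ u v : ℝ, ‖Complex.exp (Complex.I * u * v)‖ = 1 := fun u v => by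
    have : Complex.I * u * v = ((u * v : ℝ) : ℂ) * Complex.I := by push_cast; ring
    rw [this, Complex.norm_exp_ofReal_mul_I]
  -- The `k`-th term of the expansion integrates to a pair of translates.
  have hterm : ∀ k, ∫ ω in (-σ)..σ, (b k : ℂ) / 2 *
        (c k * Complex.exp (Complex.I * ω * (-τ k : ℝ))
          + (c k)⁻¹ * Complex.exp (Complex.I * ω * (τ k : ℝ)))
        * (Complex.I * h ω * Complex.exp (Complex.I * ω * x))
      = (b k : ℂ) / 2 * Complex.I * (c k * bandIntegral σ h (x + -τ k : ℝ)
          + (c k)⁻¹ * bandIntegral σ h (x + τ k : ℝ)) := by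
    intro k
    simp only [bandIntegral]
    rw [← intervalIntegral.integral_const_mul, ← intervalIntegral.integral_const_mul,
      ← intervalIntegral.integral_add, ← intervalIntegral.integral_const_mul]
    · refine intervalIntegral.integral_congr fun ω _ => ?_
      have e : ∀ s : ℝ, Complex.exp (Complex.I * ω * (x + s : ℝ))
          = Complex.exp (Complex.I * ω * x) * Complex.exp (Complex.I * ω * s) := fun s => by
        rw [← Complex.exp_add]; push_cast; ring_nf
      simp only [e]
      ring
    · exact (by fun_prop : Continuous _).intervalIntegrable _ _
    · exact (by fun_prop : Continuous _).intervalIntegrable _ _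
  have hsum : HasSum (fun k => (b k : ℂ) / 2 * Complex.I *
      (c k * bandIntegral σ h (x + -τ k : ℝ) + (c k)⁻¹ * bandIntegral σ h (x + τ k : ℝ)))
      (bandIntegral σ (fun ω => Complex.I * ω * h ω) x) := by
    simp only [← hterm]
    refine intervalIntegral.hasSum_integral_of_dominated_convergence
      (fun k ω => b k * ‖h ω‖) (fun k => (by fun_prop : Continuous _).aestronglyMeasurable)
      (fun k => Filter.Eventually.of_forall fun ω _ => ?_)
      (Filter.Eventually.of_forall fun ω _ => hb.summable.mul_right _) ?_
      (Filter.Eventually.of_forall fun ω hω => ?_)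
    · rw [norm_mul, norm_mul, norm_mul, norm_mul, hnexp, Complex.norm_I, one_mul, mul_one,
        norm_div, Complex.norm_real, Real.norm_of_nonneg (hb0 k), Complex.norm_ofNat]
      have h2 : ‖c k * Complex.exp (Complex.I * ω * (-τ k : ℝ))
          + (c k)⁻¹ * Complex.exp (Complex.I * ω * (τ k : ℝ))‖ ≤ 2 := by
        refine (norm_add_le _ _).trans ?_
        rw [norm_mul, norm_mul, hc, hcinv, hnexp, hnexp]
        norm_num
      have h3 := mul_le_mul_of_nonneg_left h2 (by linarith [hb0 k] : 0 ≤ b k / 2)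
      gcongr
      linarith
    · simp only [tsum_mul_right]
      exact (by fun_prop : Continuous _).intervalIntegrable _ _
    · rw [Set.uIoc_of_le (by linarith)] at hω
      have hs := (hid ω ⟨hω.1.le, hω.2⟩).mul_right
        (Complex.I * h ω * Complex.exp (Complex.I * ω * x))
      rwa [show (ω : ℂ) * (Complex.I * h ω * Complex.exp (Complex.I * ω * x))
        = Complex.I * ω * h ω * Complex.exp (Complex.I * ω * x) by ring] at hs
  rw [← hsum.tsum_eq]
  refine tsum_of_norm_bounded (hb.mul_left M) fun k => ?_
  rw [norm_mul, norm_mul, Complex.norm_I, mul_one, norm_div, Complex.norm_real,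
    Real.norm_of_nonneg (hb0 k), Complex.norm_ofNat]
  have h2 : ‖c k * bandIntegral σ h (x + -τ k : ℝ)
      + (c k)⁻¹ * bandIntegral σ h (x + τ k : ℝ)‖ ≤ 2 * M := by
    refine (norm_add_le _ _).trans ?_
    rw [norm_mul, norm_mul, hc, hcinv]
    linarith [hM (x + -τ k), hM (x + τ k)]
  have h3 := mul_le_mul_of_nonneg_left h2 (by linarith [hb0 k] : 0 ≤ b k / 2)
  linarith

theorem norm_iteratedDeriv_bandIntegral_le {σ : ℝ} (hσ : 0 < σ) (n : ℕ) :
    ∀ {M : ℝ} {h : ℝ → ℂ}, Continuous h → (∀ x : ℝ, ‖bandIntegral σ h x‖ ≤ M) →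
      ∀ x : ℝ, ‖iteratedDeriv n (bandIntegral σ h) x‖ ≤ M * σ ^ n := by
  induction n with
  | zero => intro M h _ hM x; simpa using hM x
  | succ n ih =>
    intro M h hh hM x
    have hd : deriv (bandIntegral σ h) = bandIntegral σ (fun ω => Complex.I * ω * h ω) :=
      funext fun z => (hasDerivAt_bandIntegral σ hh z).deriv
    rw [iteratedDeriv_succ', hd, pow_succ', ← mul_assoc]
    exact ih (by fun_prop) (norm_bandIntegral_deriv_le hσ hh hM) x

/-! ### Growth off the real axis -/

theorem real_hasSum_exp (A y : ℝ) :
    HasSum (fun n : ℕ => A * (y ^ n / n.factorial)) (A * Real.exp y) := by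
  rw [Real.exp_eq_exp_ℝ]
  exact (NormedSpace.expSeries_div_hasSum_exp y).mul_left A

/-- The Taylor terms of `F` at the point `z.re` are dominated by those of the exponential series. -/
theorem norm_taylor_term_le {F : ℂ → ℂ} {A σ : ℝ}
    (hn : ∀ (n : ℕ) (x : ℝ), ‖iteratedDeriv n F x‖ ≤ A * σ ^ n) (z : ℂ) (n : ℕ) :
    ‖((n.factorial : ℂ))⁻¹ • (z - (z.re : ℂ)) ^ n • iteratedDeriv n F (z.re : ℂ)‖
      ≤ A * ((σ * |z.im|) ^ n / n.factorial) := by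
  have hz : ‖z - (z.re : ℂ)‖ = |z.im| := by
    have : z - (z.re : ℂ) = z.im * Complex.I := by
      apply Complex.ext <;> simp
    rw [this]; simp
  rw [norm_smul, norm_smul, norm_pow, hz, norm_inv, Complex.norm_natCast]
  have h := mul_le_mul_of_nonneg_left (hn n z.re)
    (by positivity : 0 ≤ ((n.factorial : ℝ))⁻¹ * |z.im| ^ n)
  calc _ = ((n.factorial : ℝ))⁻¹ * |z.im| ^ n * ‖iteratedDeriv n F (z.re : ℂ)‖ := by ring
    _ ≤ _ := h
    _ = _ := by rw [mul_pow]; ring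

theorem norm_le_exp_of_iteratedDeriv {F : ℂ → ℂ} {A σ : ℝ} (hF : Differentiable ℂ F)
    (hn : ∀ (n : ℕ) (x : ℝ), ‖iteratedDeriv n F x‖ ≤ A * σ ^ n) (z : ℂ) :
    ‖F z‖ ≤ A * Real.exp (σ * |z.im|) := by
  rw [← (Complex.hasSum_taylorSeries_of_entire hF (z.re : ℂ) z).tsum_eq]
  exact tsum_of_norm_bounded (real_hasSum_exp A _) (norm_taylor_term_le hn z)

theorem norm_sub_re_le_of_iteratedDeriv {F : ℂ → ℂ} {A σ : ℝ} (hF : Differentiable ℂ F)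
    (hn : ∀ (n : ℕ) (x : ℝ), ‖iteratedDeriv n F x‖ ≤ A * σ ^ n) (z : ℂ) :
    ‖F z - F z.re‖ ≤ A * (Real.exp (σ * |z.im|) - 1) := by
  have h1 := (hasSum_nat_add_iff' 1).2 (Complex.hasSum_taylorSeries_of_entire hF (z.re : ℂ) z)
  have h2 := (hasSum_nat_add_iff' 1).2 (real_hasSum_exp A (σ * |z.im|))
  simp only [Finset.sum_range_one, Nat.factorial_zero, pow_zero, iteratedDeriv_zero, Nat.cast_one,
    inv_one, one_smul, div_one, mul_one] at h1 h2
  rw [← h1.tsum_eq, mul_sub, mul_one]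
  exact tsum_of_norm_bounded h2 fun n => norm_taylor_term_le hn z (n + 1)

/-! ### Inversion on the strip -/

/-- On a strip where `‖F'‖ ≤ L`, the map `z ↦ α z + F z` expands distances by at least `α - L`. -/
theorem expanding_on_strip {F F' : ℂ → ℂ} {α L y : ℝ} (hα : 0 < α)
    (hF : ∀ z, HasDerivAt F (F' z) z) (hL : ∀ z : ℂ, |z.im| ≤ y → ‖F' z‖ ≤ L)
    {z w : ℂ} (hz : |z.im| ≤ y) (hw : |w.im| ≤ y) :
    ‖F z - F w‖ ≤ L * ‖z - w‖ ∧
      (α - L) * ‖z - w‖ ≤ ‖(α * z + F z) - (α * w + F w)‖ := by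
  have hconv : Convex ℝ {z : ℂ | |z.im| ≤ y} := by
    have : {z : ℂ | |z.im| ≤ y} = Complex.imLm ⁻¹' (Set.Icc (-y) y) := by
      ext z; simp [abs_le]
    rw [this]
    exact (convex_Icc _ _).linear_preimage _
  have h1 : ‖F z - F w‖ ≤ L * ‖z - w‖ :=
    hconv.norm_image_sub_le_of_norm_hasDerivWithin_le (fun x _ => (hF x).hasDerivWithinAt) hL hw hz
  refine ⟨h1, ?_⟩
  have h2 : ‖(α : ℂ) * (z - w)‖ = α * ‖z - w‖ := by
    rw [norm_mul, Complex.norm_real, Real.norm_of_nonneg hα.le]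
  have h3 : (α * z + F z) - (α * w + F w) = (α : ℂ) * (z - w) - -(F z - F w) := by ring
  have h4 := norm_sub_norm_le ((α : ℂ) * (z - w)) (-(F z - F w))
  rw [← h3, norm_neg, h2] at h4
  linarith

/-- Solvability of `α z + F z = w` in a closed strip, as the fixed point of `z ↦ (w - F z) / α`. -/
theorem exists_solution_in_strip {F F' : ℂ → ℂ} {α L B y : ℝ} (hα : 0 < α) (hL0 : 0 ≤ L)
    (hLα : L < α) (hy : 0 ≤ y)
    (hF : ∀ z, HasDerivAt F (F' z) z) (hL : ∀ z : ℂ, |z.im| ≤ y → ‖F' z‖ ≤ L)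
    (hB : ∀ z : ℂ, |z.im| ≤ y → |(F z).im| ≤ B) {w : ℂ} (hw : |w.im| ≤ α * y - B) :
    ∃ z : ℂ, |z.im| ≤ y ∧ α * z + F z = w := by
  have hαC : (α : ℂ) ≠ 0 := by exact_mod_cast hα.ne'
  have hmaps : Set.MapsTo (fun z => (w - F z) / α) {z : ℂ | |z.im| ≤ y} {z : ℂ | |z.im| ≤ y} := by
    intro z hz
    simp only [Set.mem_ofPred_eq, Complex.div_ofReal_im, Complex.sub_im, abs_div, abs_of_pos hα]
    rw [div_le_iff₀ hα]
    have h1 := hB z hz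
    have h2 := abs_sub w.im (F z).im
    linarith
  have hclosed : IsClosed {z : ℂ | |z.im| ≤ y} :=
    isClosed_le (by fun_prop) continuous_const
  have hK : L / α < 1 := (div_lt_one hα).2 hLα
  have hcontr : ContractingWith ⟨L / α, by positivity⟩ (hmaps.restrict _ _ _) := by
    refine ⟨by exact_mod_cast hK, LipschitzWith.of_dist_le_mul fun a b => ?_⟩
    have h1 := (expanding_on_strip hα hF hL a.2 b.2).1
    rw [Subtype.dist_eq, Subtype.dist_eq, dist_eq_norm, dist_eq_norm]
    have h2 : (w - F a) / α - (w - F b) / α = -(F a - F b) / (α : ℂ) := by ring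
    simp only [Set.MapsTo.val_restrict_apply, h2, norm_div, norm_neg, Complex.norm_real,
      Real.norm_of_nonneg hα.le]
    calc _ ≤ L * ‖(a : ℂ) - b‖ / α := by gcongr
      _ = L / α * ‖(a : ℂ) - b‖ := by ring
  obtain ⟨z, hz, hfix, -⟩ := ContractingWith.exists_fixedPoint' hclosed.isComplete hmaps hcontr
    (x := 0) (by simpa using hy) (edist_ne_top _ _)
  refine ⟨z, hz, ?_⟩
  have h1 : (w - F z) / α = z := hfix
  rw [div_eq_iff hαC] at h1
  rw [mul_comm, ← h1]
  ring

/-- The half-height of the strip is the value at `y* = log (α / (A σ)) / σ` of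
`φ y = α y - A (exp (σ y) - 1)`; slightly smaller heights `y` still give `φ y > v`. -/
theorem exists_height {A σ α v : ℝ} (hσ : 0 < σ) (hA : 0 < A) (hα : A * σ < α)
    (hv : v < (α / σ) * Real.log (α / (A * σ)) - (α - A * σ) / σ) :
    ∃ y, 0 ≤ y ∧ A * σ * Real.exp (σ * y) < α ∧ v < α * y - A * (Real.exp (σ * y) - 1) := by
  have hAσ : 0 < A * σ := by positivity
  set r := α / (A * σ) with hr
  have hr1 : 1 < r := (one_lt_div hAσ).2 hα
  set Y := Real.log r / σ with hY
  have hY0 : 0 < Y := div_pos (Real.log_pos hr1) hσ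
  have hφ : v < α * Y - A * (Real.exp (σ * Y) - 1) := by
    have h1 : Real.exp (σ * Y) = r := by
      rw [hY, mul_div_cancel₀ _ hσ.ne', Real.exp_log (by linarith)]
    rw [h1]
    convert hv using 1
    rw [hY, hr]
    field_simp
  have hcont : ContinuousAt (fun y => α * y - A * (Real.exp (σ * y) - 1)) Y := by fun_prop
  have hev := (hcont.eventually (lt_mem_nhds hφ)).and (lt_mem_nhds hY0)
  obtain ⟨y, ⟨h1, h2⟩, h3⟩ :=
    ((hev.filter_mono nhdsWithin_le_nhds).and (self_mem_nhdsWithin (s := Set.Iio Y))).exists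
  refine ⟨y, h2.le, ?_, h1⟩
  have h4 : Real.exp (σ * y) < r := by
    rw [← Real.lt_log_iff_exp_lt (by linarith), mul_comm]
    exact (lt_div_iff₀ hσ).1 h3
  rw [hr, lt_div_iff₀ hAσ] at h4
  linarith

/-- The inverse `g⁻¹` of `g(t) = αt + f(t)` extends holomorphically to the
horizontal strip `S_a = {w : |Im w| < a}` where
`a = (α/σ) log(α/(Aσ)) − (α − Aσ)/σ > 0`. -/
theorem ginv_extends_to_strip
    (f : ℝ → ℝ) (σ A α : ℝ) (hσ : 0 < σ) (hA : 0 < A)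
    (hf : Continuous f) (hbl : Bandlimited σ f)
    (hdecay : ∀ t : ℝ, |f t| ≤ A / (1 + t ^ 2))
    (hα : A * σ < α) :
    Function.Bijective (fun t : ℝ => α * t + f t) ∧
    0 < (α / σ) * Real.log (α / (A * σ)) - (α - A * σ) / σ ∧
    ∃ G : ℂ → ℂ,
      DifferentiableOn ℂ G
        {w : ℂ | |w.im| < (α / σ) * Real.log (α / (A * σ)) - (α - A * σ) / σ} ∧
      ∀ u : ℝ, G (u : ℂ) = ((Function.invFun (fun t : ℝ => α * t + f t) u : ℝ) : ℂ) := by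
  have hAσ : 0 < A * σ := by positivity
  have hα0 : 0 < α := hAσ.trans hα
  have hint : MeasureTheory.Integrable f := by
    refine (integrable_inv_one_add_sq.const_mul A).mono' hf.aestronglyMeasurable
      (Filter.Eventually.of_forall fun t => ?_)
    rw [← div_eq_mul_inv]
    exact hdecay t
  obtain ⟨h, hh, hFf⟩ := hbl.exists_bandIntegral hσ hf hint
  have hfA : ∀ t, |f t| ≤ A := fun t =>
    (hdecay t).trans (div_le_self hA.le (by nlinarith [sq_nonneg t]))
  have hM : ∀ x : ℝ, ‖bandIntegral σ h x‖ ≤ A := fun x => by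
    rw [hFf, Complex.norm_real]; exact hfA x
  set F := bandIntegral σ h with hFdef
  set F' := bandIntegral σ (fun ω => Complex.I * ω * h ω) with hF'def
  have hF : ∀ z, HasDerivAt F (F' z) z := hasDerivAt_bandIntegral σ hh
  have hF' : ∀ z : ℂ, ‖F' z‖ ≤ A * σ * Real.exp (σ * |z.im|) :=
    norm_le_exp_of_iteratedDeriv
      (fun z => (hasDerivAt_bandIntegral σ (by fun_prop) z).differentiableAt)
      (fun n => norm_iteratedDeriv_bandIntegral_le hσ n (by fun_prop)
        (norm_bandIntegral_deriv_le hσ hh hM))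
  have hFim : ∀ z : ℂ, |(F z).im| ≤ A * (Real.exp (σ * |z.im|) - 1) := fun z => by
    refine le_trans ?_ (norm_sub_re_le_of_iteratedDeriv (F := F)
      (fun z => (hF z).differentiableAt)
      (fun n => norm_iteratedDeriv_bandIntegral_le hσ n hh hM) z)
    have h1 := Complex.abs_im_le_norm (F z - F z.re)
    rwa [Complex.sub_im, hFf, Complex.ofReal_im, sub_zero, ← hFf] at h1
  have hF'y : ∀ y : ℝ, ∀ z : ℂ, |z.im| ≤ y → ‖F' z‖ ≤ A * σ * Real.exp (σ * y) :=
    fun y z hz => (hF' z).trans (by gcongr)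
  have hFy : ∀ y : ℝ, ∀ z : ℂ, |z.im| ≤ y → |(F z).im| ≤ A * (Real.exp (σ * y) - 1) :=
    fun y z hz => (hFim z).trans (by gcongr)
  have hgF : ∀ t : ℝ, ((α * t + f t : ℝ) : ℂ) = α * (t : ℂ) + F t := fun t => by
    rw [hFf]; push_cast; ring
  -- Injectivity on the union of all strips on which `‖F'‖ < α`.
  have huniq : ∀ z w : ℂ, A * σ * Real.exp (σ * |z.im|) < α → A * σ * Real.exp (σ * |w.im|) < α →
      α * z + F z = α * w + F w → z = w := by
    intro z w hz hw hzw
    obtain ⟨y, hzy, hwy, hy⟩ : ∃ y, |z.im| ≤ y ∧ |w.im| ≤ y ∧ A * σ * Real.exp (σ * y) < α := by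
      refine ⟨max |z.im| |w.im|, le_max_left _ _, le_max_right _ _, ?_⟩
      rcases max_cases |z.im| |w.im| with h | h <;> rw [h.1] <;> assumption
    have h1 := (expanding_on_strip hα0 hF (hF'y y) hzy hwy).2
    rw [hzw, sub_self, norm_zero] at h1
    have h2 : ‖z - w‖ ≤ 0 := by
      by_contra! hc
      nlinarith [mul_pos (sub_pos.2 hy) hc]
    exact sub_eq_zero.1 (norm_le_zero_iff.1 h2)
  have hreal : ∀ t : ℝ, A * σ * Real.exp (σ * |(t : ℂ).im|) < α := fun t => by simpa using hα
  have hbij : Function.Bijective (fun t : ℝ => α * t + f t) := by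
    constructor
    · intro s t hst
      have h1 : α * (s : ℂ) + F s = α * (t : ℂ) + F t := by
        rw [← hgF, ← hgF]; exact congrArg _ hst
      exact_mod_cast huniq s t (hreal s) (hreal t) h1
    · intro u
      -- The closed strip of half-height `0` is the real line.
      obtain ⟨z, hz, hzu⟩ := exists_solution_in_strip (y := 0) (B := 0) (w := (u : ℂ)) hα0
        (by positivity) (by simpa using hα) le_rfl hF (hF'y 0)
        (fun z hz => by simpa using hFy 0 z hz) (by simp)
      have hz0 : z = (z.re : ℂ) := by
        apply Complex.ext
        · simp
        · simpa using hz
      refine ⟨z.re, ?_⟩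
      have h1 := hgF z.re
      rw [← hz0, hzu] at h1
      exact_mod_cast h1
  have hapos : 0 < (α / σ) * Real.log (α / (A * σ)) - (α - A * σ) / σ := by
    have h1 : Real.log (A * σ / α) < A * σ / α - 1 :=
      Real.log_lt_sub_one_of_pos (by positivity) ((div_lt_one hα0).2 hα).ne
    have h2 : Real.log (α / (A * σ)) = -Real.log (A * σ / α) := by
      rw [← Real.log_inv, inv_div]
    have h3 : (α / σ) * Real.log (α / (A * σ)) - (α - A * σ) / σ
        = α / σ * (A * σ / α - 1 - Real.log (A * σ / α)) := by
      rw [h2]; field_simp; ring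
    rw [h3]
    have h4 : 0 < A * σ / α - 1 - Real.log (A * σ / α) := by linarith
    positivity
  refine ⟨hbij, hapos, ?_⟩
  set a := (α / σ) * Real.log (α / (A * σ)) - (α - A * σ) / σ with ha
  have hex : ∀ w : ℂ, ∃ z : ℂ, |w.im| < a →
      A * σ * Real.exp (σ * |z.im|) < α ∧ α * z + F z = w := by
    intro w
    by_cases hw : |w.im| < a
    · obtain ⟨y, hy0, hyα, hwy⟩ := exists_height hσ hA hα hw
      obtain ⟨z, hz, hzw⟩ := exists_solution_in_strip hα0 (by positivity) hyα hy0 hF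
        (hF'y y) (hFy y) hwy.le
      exact ⟨z, fun _ => ⟨lt_of_le_of_lt (by gcongr) hyα, hzw⟩⟩
    · exact ⟨0, fun h => absurd h hw⟩
  choose G hG using hex
  have hGuniq : ∀ w z : ℂ, |w.im| < a → A * σ * Real.exp (σ * |z.im|) < α → α * z + F z = w →
      G w = z := fun w z hw hz hzw =>
    huniq _ _ (hG w hw).1 hz ((hG w hw).2.trans hzw.symm)
  refine ⟨G, fun w₀ hw₀ => ?_, fun u => ?_⟩
  · obtain ⟨y, hy0, hyα, hwy⟩ := exists_height hσ hA hα hw₀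
    -- Near `w₀` all values of `G` lie in one closed strip.
    have hGy : ∀ w : ℂ, |w.im| < a → |w.im| < α * y - A * (Real.exp (σ * y) - 1) →
        |(G w).im| ≤ y := by
      intro w hwa hw
      obtain ⟨z, hz, hzw⟩ := exists_solution_in_strip hα0 (by positivity) hyα hy0 hF
        (hF'y y) (hFy y) hw.le
      rw [hGuniq w z hwa (lt_of_le_of_lt (by gcongr) hyα) hzw]
      exact hz
    have hcim : Continuous fun w : ℂ => |w.im| := by fun_prop
    have hnear : ∀ᶠ w in nhds w₀, |w.im| < a ∧ |w.im| < α * y - A * (Real.exp (σ * y) - 1) :=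
      (hcim.continuousAt.eventually (gt_mem_nhds hw₀)).and
        (hcim.continuousAt.eventually (gt_mem_nhds hwy))
    have hcont : ContinuousAt G w₀ := by
      have hpos : 0 < α - A * σ * Real.exp (σ * y) := sub_pos.2 hyα
      rw [ContinuousAt, tendsto_iff_norm_sub_tendsto_zero]
      have hlim : Filter.Tendsto (fun w => ‖w - w₀‖ / (α - A * σ * Real.exp (σ * y)))
          (nhds w₀) (nhds 0) := by
        have hc : Continuous fun w : ℂ => ‖w - w₀‖ / (α - A * σ * Real.exp (σ * y)) := by
          fun_prop
        simpa using hc.tendsto w₀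
      refine squeeze_zero' (Filter.Eventually.of_forall fun w => norm_nonneg _) ?_ hlim
      filter_upwards [hnear] with w hw
      have h1 := (expanding_on_strip hα0 hF (hF'y y) (hGy w hw.1 hw.2) (hGy w₀ hw₀ hwy)).2
      rw [(hG w hw.1).2, (hG w₀ hw₀).2] at h1
      rw [le_div_iff₀ hpos]
      linarith
    have hder : HasDerivAt (fun z => α * z + F z) (α + F' (G w₀)) (G w₀) := by
      have h1 : HasDerivAt (fun z : ℂ => (α : ℂ) * z) α (G w₀) := by
        simpa using (hasDerivAt_id (G w₀)).const_mul (α : ℂ)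
      exact h1.add (hF (G w₀))
    have hne : (α : ℂ) + F' (G w₀) ≠ 0 := by
      intro h0
      have h1 : ‖F' (G w₀)‖ = α := by
        rw [eq_neg_of_add_eq_zero_right h0, norm_neg, Complex.norm_real,
          Real.norm_of_nonneg hα0.le]
      have h2 := hF' (G w₀)
      have h3 := (hG w₀ hw₀).1
      linarith
    exact (HasDerivAt.of_local_left_inverse hcont hder hne
      (hnear.mono fun w hw => (hG w hw.1).2)).differentiableAt.differentiableWithinAt
  · have hinv : α * Function.invFun (fun t : ℝ => α * t + f t) u
        + f (Function.invFun (fun t : ℝ => α * t + f t) u) = u :=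
      Function.invFun_eq (hbij.2 u)
    refine hGuniq _ _ ?_ (hreal _) ?_
    · simpa using hapos
    · rw [← hgF, hinv]
end
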